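/- arXiv:2103.00580 — 4 statements merged into one kernel-verified Lean document; each statement's English description precedes it below -/
import Mathlib

section
/- Explicit Stein kernel under the Bernoulli null and a product kernel: assume q̃ = ER(a*) with a* ∈ (0,1), and that the feature map satisfies ⟨Φ(u),Φ(v)⟩_H = Π_{t∈[N]} l_t(u_t,v_t), where each l_t : {0,1}×{0,1} → ℝ is symmetric with l_t(0,0) = l_t(1,1) = 1. Then ξ_s(x) = (a* − x_s)·(Φ(x^{(s,1)}) − Φ(x^{(s,0)})) for every s, and for s ≠ s': h_x(s,s') = (a*−x_s)(a*−x_{s'})·(l_s(1,x_s) − l_s(0,x_s))·(l_{s'}(1,x_{s'}) − l_{s'}(0,x_{s'})), while h_x(s,s) = (a*−x_s)²·(2 − 2·l_s(0,1)). Consequently gKSS(q̃;x)² = (1/N²)·[ Σ_{s≠s'} (a*−x_s)(a*−x_{s'})(l_s(1,x_s)−l_s(0,x_s))(l_{s'}(1,x_{s'})−l_{s'}(0,x_{s'})) + Σ_s (a*−x_s)²(2 − 2 l_s(0,1)) ]. -/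
open Finset
open scoped RealInnerProductSpace

/-- Replace coordinate `s` of `x` by `1` (i.e. `true`). -/
def up1 {N : ℕ} (x : Fin N → Bool) (s : Fin N) : Fin N → Bool := Function.update x s true

/-- Replace coordinate `s` of `x` by `0` (i.e. `false`). -/
def up0 {N : ℕ} (x : Fin N → Bool) (s : Fin N) : Fin N → Bool := Function.update x s false

/-- A bit regarded as a real number. -/
def bval (b : Bool) : ℝ := if b then 1 else 0

/-- Conditional probability `q(x^{(s,1)} | x_{-s})`. -/
noncomputable def condP {N : ℕ} (q : (Fin N → Bool) → ℝ) (x : Fin N → Bool) (s : Fin N) : ℝ :=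
  q (up1 x s) / (q (up1 x s) + q (up0 x s))

/-- The Bernoulli random graph pmf `ER(p)` on `{0,1}^N`. -/
noncomputable def erPMF {N : ℕ} (p : ℝ) (x : Fin N → Bool) : ℝ :=
  p ^ (univ.filter fun s => x s = true).card *
    (1 - p) ^ (N - (univ.filter fun s => x s = true).card)

variable {H : Type*} [NormedAddCommGroup H] [InnerProductSpace ℝ H]

/-- `ξ_s(x) := q(x^{(s,1)}|x_{−s})·(Φ(x^{(s,1)}) − Φ(x^{(s,0)})) + (Φ(x^{(s,0)}) − Φ(x))`. -/
noncomputable def xi {N : ℕ} (q : (Fin N → Bool) → ℝ) (Φ : (Fin N → Bool) → H) (s : Fin N)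
    (x : Fin N → Bool) : H :=
  condP q x s • (Φ (up1 x s) - Φ (up0 x s)) + (Φ (up0 x s) - Φ x)

lemma er_up1 {N : ℕ} (a : ℝ) (x : Fin N → Bool) (s : Fin N) :
    ∃ k m : ℕ, erPMF a (up1 x s) = a ^ (k + 1) * (1 - a) ^ m ∧
      erPMF a (up0 x s) = a ^ k * (1 - a) ^ (m + 1) := by
  have h0 : (univ.filter fun t => up0 x s t = true) = (univ.filter fun t => x t = true).erase s := by
    ext t
    simp only [mem_filter, mem_univ, true_and, mem_erase, mem_insert]
    by_cases h : t = s
    · subst h; simp [up0]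
    · simp [up0, h]
  have h1 : (univ.filter fun t => up1 x s t = true) =
      insert s ((univ.filter fun t => x t = true).erase s) := by
    ext t
    simp only [mem_filter, mem_univ, true_and, mem_erase, mem_insert]
    by_cases h : t = s
    · subst h; simp [up1]
    · simp [up1, h]
  have hc : (insert s ((univ.filter fun t => x t = true).erase s)).card =
      ((univ.filter fun t => x t = true).erase s).card + 1 :=
    card_insert_of_notMem (by simp)
  have hle : (insert s ((univ.filter fun t => x t = true).erase s)).card ≤ N := by
    simpa using card_le_univ (insert s ((univ.filter fun t => x t = true).erase s))
  refine ⟨((univ.filter fun t => x t = true).erase s).card,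
    N - (((univ.filter fun t => x t = true).erase s).card + 1), ?_, ?_⟩
  · unfold erPMF; rw [h1, hc]
  · unfold erPMF; rw [h0]
    rw [hc] at hle
    congr 2
    omega

lemma condP_er {N : ℕ} (a : ℝ) (ha : a ∈ Set.Ioo (0 : ℝ) 1) (x : Fin N → Bool) (s : Fin N) :
    condP (erPMF a) x s = a := by
  obtain ⟨k, m, h1, h0⟩ := er_up1 a x s
  have ha0 : 0 < a := ha.1
  have ha1 : 0 < 1 - a := by linarith [ha.2]
  unfold condP
  rw [h1, h0]
  have : a ^ (k + 1) * (1 - a) ^ m + a ^ k * (1 - a) ^ (m + 1) = a ^ k * (1 - a) ^ m := by ring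
  rw [this, div_eq_iff (by positivity)]
  ring

lemma xi_er (a : ℝ) (ha : a ∈ Set.Ioo (0 : ℝ) 1) {N : ℕ} (Φ : (Fin N → Bool) → H)
    (s : Fin N) (x : Fin N → Bool) :
    xi (erPMF a) Φ s x = (a - bval (x s)) • (Φ (up1 x s) - Φ (up0 x s)) := by
  unfold xi
  rw [condP_er a ha]
  cases h : x s
  · have : up0 x s = x := by unfold up0; rw [← h]; simp
    rw [this]; simp [bval]
  · have : up1 x s = x := by unfold up1; rw [← h]; simp
    rw [this]; simp only [bval, if_true]; module

lemma prod_same {N : ℕ} (l : Fin N → Bool → Bool → ℝ) (hd : ∀ t b, l t b b = 1)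
    (x : Fin N → Bool) (s : Fin N) (b c : Bool) :
    ∏ t, l t (Function.update x s b t) (Function.update x s c t) = l s b c := by
  rw [Finset.prod_eq_single s]
  · simp
  · intro t _ ht; simp [ht, hd]
  · simp

lemma prod_diff {N : ℕ} (l : Fin N → Bool → Bool → ℝ) (hd : ∀ t b, l t b b = 1)
    (x : Fin N → Bool) (s s' : Fin N) (hs : s ≠ s') (b c : Bool) :
    ∏ t, l t (Function.update x s b t) (Function.update x s' c t) =
      l s b (x s) * l s' (x s') c := by
  rw [Finset.prod_eq_mul s s' hs]
  · simp [hs, hs.symm]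
  · intro t _ ht; simp [ht.1, ht.2, hd]
  · simp
  · simp

/-- explicit Stein kernel under the Bernoulli null and a product kernel:
with `q̃ = ER(a*)`, `a* ∈ (0,1)`, `⟪Φ(u),Φ(v)⟫ = Π_t l_t(u_t,v_t)`, each `l_t` symmetric with
`l_t(0,0) = l_t(1,1) = 1`, one has `ξ_s(x) = (a*−x_s)·(Φ(x^{(s,1)}) − Φ(x^{(s,0)}))`,
the stated formulas for `h_x(s,s')` (`s ≠ s'`) and `h_x(s,s)`, and the resulting closed form
for `gKSS(q̃;x)² = ‖(1/N) Σ_s ξ_s(x)‖²`. -/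
theorem stein_kernel_bernoulli_product {N : ℕ} (hN : 0 < N) (a : ℝ)
    (ha : a ∈ Set.Ioo (0 : ℝ) 1) (l : Fin N → Bool → Bool → ℝ)
    (Φ : (Fin N → Bool) → H)
    (hK : ∀ u v : Fin N → Bool, ⟪Φ u, Φ v⟫ = ∏ t : Fin N, l t (u t) (v t))
    (hsym : ∀ (t : Fin N) (b b' : Bool), l t b b' = l t b' b)
    (hdiag0 : ∀ t : Fin N, l t false false = 1) (hdiag1 : ∀ t : Fin N, l t true true = 1) :
    (∀ (s : Fin N) (x : Fin N → Bool),
        xi (erPMF a) Φ s x = (a - bval (x s)) • (Φ (up1 x s) - Φ (up0 x s))) ∧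
      (∀ (s s' : Fin N) (x : Fin N → Bool), s ≠ s' →
        ⟪xi (erPMF a) Φ s x, xi (erPMF a) Φ s' x⟫ =
          (a - bval (x s)) * (a - bval (x s')) *
            (l s true (x s) - l s false (x s)) * (l s' true (x s') - l s' false (x s'))) ∧
      (∀ (s : Fin N) (x : Fin N → Bool),
        ⟪xi (erPMF a) Φ s x, xi (erPMF a) Φ s x⟫ =
          (a - bval (x s)) ^ 2 * (2 - 2 * l s false true)) ∧
      ∀ x : Fin N → Bool,
        ‖((N : ℝ))⁻¹ • ∑ s : Fin N, xi (erPMF a) Φ s x‖ ^ 2 =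
          (((N : ℝ)) ^ 2)⁻¹ *
            ((∑ s : Fin N, ∑ s' : Fin N,
                if s ≠ s' then
                  (a - bval (x s)) * (a - bval (x s')) *
                    (l s true (x s) - l s false (x s)) *
                    (l s' true (x s') - l s' false (x s'))
                else 0) +
              ∑ s : Fin N, (a - bval (x s)) ^ 2 * (2 - 2 * l s false true)) := by
  have hd : ∀ t b, l t b b = 1 := by
    intro t b; cases b
    · exact hdiag0 t
    · exact hdiag1 t
  have A := fun s x => xi_er a ha Φ s x
  have B : ∀ (s s' : Fin N) (x : Fin N → Bool), s ≠ s' →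
        ⟪xi (erPMF a) Φ s x, xi (erPMF a) Φ s' x⟫ =
          (a - bval (x s)) * (a - bval (x s')) *
            (l s true (x s) - l s false (x s)) * (l s' true (x s') - l s' false (x s')) := by
    intro s s' x hs
    rw [A, A, real_inner_smul_left, real_inner_smul_right, inner_sub_left, inner_sub_right,
      inner_sub_right, hK, hK, hK, hK]
    unfold up1 up0
    simp only [prod_diff l hd x s s' hs]
    rw [hsym s' (x s') true, hsym s' (x s') false]
    ring
  have C : ∀ (s : Fin N) (x : Fin N → Bool),
        ⟪xi (erPMF a) Φ s x, xi (erPMF a) Φ s x⟫ =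
          (a - bval (x s)) ^ 2 * (2 - 2 * l s false true) := by
    intro s x
    rw [A, real_inner_smul_left, real_inner_smul_right, inner_sub_left, inner_sub_right,
      inner_sub_right, hK, hK, hK, hK]
    unfold up1 up0
    simp only [prod_same l hd x s]
    rw [hsym s true false, hd, hd]
    ring
  refine ⟨A, B, C, fun x => ?_⟩
  rw [norm_smul, mul_pow, norm_inv, Real.norm_natCast, inv_pow, ← real_inner_self_eq_norm_sq,
    sum_inner]
  congr 1
  rw [← Finset.sum_add_distrib]
  refine Finset.sum_congr rfl fun s _ => ?_
  rw [inner_sum, ← C s x]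
  have : ⟪xi (erPMF a) Φ s x, xi (erPMF a) Φ s x⟫ =
      ∑ s', if s = s' then ⟪xi (erPMF a) Φ s x, xi (erPMF a) Φ s' x⟫ else 0 := by simp
  rw [this, ← Finset.sum_add_distrib]
  refine Finset.sum_congr rfl fun s' _ => ?_
  by_cases h : s = s'
  · simp [h]
  · simp only [ne_eq, h, not_false_eq_true, if_true, if_false, add_zero]
    exact B s s' x h
end

section
/- Exchangeable-pair regression identity for W_3 (from the proof of Proposition 2): for every k ∈ ℝ^N with Σ_s k_s = B, D W_3(k) = −(1/B)·W_3(k). -/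
open Finset

/-- The multinomial moment `m_{s,t} = E[k_s k_t] = B(B−1)/N² + 1{s=t}·B/N`. -/
noncomputable def mMoment (B N : ℕ) (s t : Fin N) : ℝ :=
  (B : ℝ) * ((B : ℝ) - 1) / ((N : ℝ)) ^ 2 + if s = t then (B : ℝ) / (N : ℝ) else 0

/-- `W_1(k) := (1/B²) Σ_{s,t} (k_s k_t − m_{s,t}) h(s,t)`. -/
noncomputable def W1 (B N : ℕ) (h : Fin N → Fin N → ℝ) (k : Fin N → ℝ) : ℝ :=
  (((B : ℝ)) ^ 2)⁻¹ * ∑ s : Fin N, ∑ t : Fin N, (k s * k t - mMoment B N s t) * h s t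

/-- `W_2(k) := (1/B²) Σ_{s,t} (k_s − B/N) h(s,t)`. -/
noncomputable def W2 (B N : ℕ) (h : Fin N → Fin N → ℝ) (k : Fin N → ℝ) : ℝ :=
  (((B : ℝ)) ^ 2)⁻¹ * ∑ s : Fin N, ∑ t : Fin N, (k s - (B : ℝ) / (N : ℝ)) * h s t

/-- `W_3(k) := (1/B²) Σ_s (k_s − B/N) h(s,s)`. -/
noncomputable def W3 (B N : ℕ) (h : Fin N → Fin N → ℝ) (k : Fin N → ℝ) : ℝ :=
  (((B : ℝ)) ^ 2)⁻¹ * ∑ s : Fin N, (k s - (B : ℝ) / (N : ℝ)) * h s s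

/-- `k^{i→j} := k − e_i + e_j`. -/
def kmove {N : ℕ} (k : Fin N → ℝ) (i j : Fin N) : Fin N → ℝ :=
  fun t => k t - (if t = i then 1 else 0) + (if t = j then 1 else 0)

/-- The exchangeable-pair average
`D W(k) := Σ_{i,j} (k_i/(BN))·(W(k^{i→j}) − W(k))`. -/
noncomputable def Dop (B N : ℕ) (W : (Fin N → ℝ) → ℝ) (k : Fin N → ℝ) : ℝ :=
  ∑ i : Fin N, ∑ j : Fin N, k i / ((B : ℝ) * (N : ℝ)) * (W (kmove k i j) - W k)

/-- exchangeable-pair regression identity for `W_3`: for every `k ∈ ℝ^N` with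
`Σ_s k_s = B`, `D W_3(k) = −(1/B)·W_3(k)`. -/
theorem exchangeable_pair_W3 {B N : ℕ} (hB : 0 < B) (hN : 0 < N)
    (h : Fin N → Fin N → ℝ) (hsymm : ∀ s t, h s t = h t s)
    (k : Fin N → ℝ) (hk : ∑ s : Fin N, k s = (B : ℝ)) :
    Dop B N (W3 B N h) k = -((B : ℝ))⁻¹ * W3 B N h k := by
  have hB' : (B : ℝ) ≠ 0 := by positivity
  have hN' : (N : ℝ) ≠ 0 := by positivity
  have key : ∀ i j : Fin N, W3 B N h (kmove k i j) - W3 B N h k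
      = ((B : ℝ) ^ 2)⁻¹ * (h j j - h i i) := by
    intro i j
    unfold W3 kmove
    rw [← mul_sub, ← Finset.sum_sub_distrib]
    congr 1
    have e : ∀ s : Fin N, (k s - (if s = i then 1 else 0) + (if s = j then 1 else 0)
        - (B : ℝ) / (N : ℝ)) * h s s - (k s - (B : ℝ) / (N : ℝ)) * h s s
        = (if s = j then h s s else 0) - (if s = i then h s s else 0) := by
      intro s
      split_ifs <;> ring
    simp only [e, Finset.sum_sub_distrib, Finset.sum_ite_eq', Finset.mem_univ, if_true]
  have inner : ∀ i : Fin N, ∑ j : Fin N, k i / ((B : ℝ) * (N : ℝ)) *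
      (W3 B N h (kmove k i j) - W3 B N h k)
      = k i * (((B : ℝ) * N * (B : ℝ) ^ 2)⁻¹ * ∑ j : Fin N, h j j)
        - ((B : ℝ) * (B : ℝ) ^ 2)⁻¹ * (k i * h i i) := by
    intro i
    simp only [key]
    rw [← Finset.mul_sum, ← Finset.mul_sum, Finset.sum_sub_distrib]
    simp only [Finset.sum_const, Finset.card_univ, Fintype.card_fin, nsmul_eq_mul]
    field_simp
  unfold Dop
  simp only [inner]
  rw [Finset.sum_sub_distrib, ← Finset.sum_mul, hk, ← Finset.mul_sum]
  unfold W3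
  simp only [sub_mul, Finset.sum_sub_distrib, ← Finset.mul_sum]
  field_simp
  ring
end

section
/- Exact linear regression condition for W_1 (the zero-remainder exchangeable-pair condition in the proof of Proposition 2): for every k ∈ ℝ^N with Σ_s k_s = B, D W_1(k) = −(2/B)·W_1(k) + (2(B−1)/(BN))·W_2(k) + (1/B)·W_3(k). In particular, the conditional expectation of the increment of the vector (W_1, W_2, W_3) for the multinomial exchangeable pair is an exact linear function of (W_1, W_2, W_3), with remainder R = 0. -/
open Finset

/-- Increment of `W1` under a move. -/
lemma W1_incr (B N : ℕ) (h : Fin N → Fin N → ℝ) (hsymm : ∀ s t, h s t = h t s)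
    (k : Fin N → ℝ) (i j : Fin N) :
    W1 B N h (kmove k i j) - W1 B N h k = (((B : ℝ)) ^ 2)⁻¹ *
      (2 * (∑ t, k t * h j t) - 2 * (∑ t, k t * h i t) + h j j + h i i - 2 * h i j) := by
  unfold W1
  rw [← mul_sub, ← Finset.sum_sub_distrib]
  congr 1
  have e : ∀ s, (∑ t, (kmove k i j s * kmove k i j t - mMoment B N s t) * h s t)
      - (∑ t, (k s * k t - mMoment B N s t) * h s t)
      = k s * (h s j - h s i) + ((if s = j then 1 else 0) - (if s = i then 1 else 0)) *
        (∑ t, k t * h s t + h s j - h s i) := by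
    intro s
    have e1 : h s j = ∑ t, (if t = j then 1 else 0) * h s t := by simp
    have e2 : h s i = ∑ t, (if t = i then 1 else 0) * h s t := by simp
    rw [e1, e2, ← Finset.sum_sub_distrib, ← Finset.sum_sub_distrib, ← Finset.sum_add_distrib,
      ← Finset.sum_sub_distrib, Finset.mul_sum, Finset.mul_sum, ← Finset.sum_add_distrib]
    refine Finset.sum_congr rfl fun t _ => ?_
    unfold kmove
    ring
  rw [Finset.sum_congr rfl fun s _ => e s]
  simp only [mul_sub, sub_mul, Finset.sum_add_distrib, Finset.sum_sub_distrib, ite_mul, one_mul,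
    zero_mul, Finset.sum_ite_eq', Finset.mem_univ, if_true]
  have c : ∀ x, ∑ s, k s * h s x = ∑ s, k s * h x s := fun x =>
    Finset.sum_congr rfl fun s _ => by rw [hsymm]
  rw [c, c, hsymm j i]
  ring

/-- exact linear regression condition for `W_1` (zero-remainder
exchangeable-pair condition): for every `k ∈ ℝ^N` with `Σ_s k_s = B`,
`D W_1(k) = −(2/B)·W_1(k) + (2(B−1)/(BN))·W_2(k) + (1/B)·W_3(k)`. -/
theorem exchangeable_pair_W1 {B N : ℕ} (hB : 0 < B) (hN : 0 < N)
    (h : Fin N → Fin N → ℝ) (hsymm : ∀ s t, h s t = h t s)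
    (k : Fin N → ℝ) (hk : ∑ s : Fin N, k s = (B : ℝ)) :
    Dop B N (W1 B N h) k =
      -(2 / (B : ℝ)) * W1 B N h k +
        2 * ((B : ℝ) - 1) / ((B : ℝ) * (N : ℝ)) * W2 B N h k +
        ((B : ℝ))⁻¹ * W3 B N h k := by
  have hB' : (B : ℝ) ≠ 0 := by positivity
  have hN' : (N : ℝ) ≠ 0 := by positivity
  have hP : ∑ i, ∑ t, k t * h i t = ∑ i, k i * ∑ t, h i t := by
    rw [Finset.sum_comm]
    refine Finset.sum_congr rfl fun i _ => ?_
    rw [Finset.mul_sum]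
    exact Finset.sum_congr rfl fun t _ => by rw [hsymm]
  have hL : Dop B N (W1 B N h) k = (((B : ℝ)) ^ 2)⁻¹ * ((B : ℝ) * N)⁻¹ *
      (2 * B * (∑ i, k i * ∑ t, h i t) - 2 * N * (∑ i, k i * ∑ t, k t * h i t)
        + B * (∑ i, h i i) + N * (∑ i, k i * h i i) - 2 * (∑ i, k i * ∑ t, h i t)) := by
    have e : ∀ i, ∑ j, k i / ((B : ℝ) * (N : ℝ)) * (W1 B N h (kmove k i j) - W1 B N h k)
        = (((B : ℝ)) ^ 2)⁻¹ * ((B : ℝ) * N)⁻¹ * (k i * (2 * (∑ i, k i * ∑ t, h i t))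
          - 2 * N * (k i * ∑ t, k t * h i t) + k i * (∑ i, h i i) + N * (k i * h i i)
          - 2 * (k i * ∑ t, h i t)) := by
      intro i
      simp only [W1_incr B N h hsymm]
      rw [← Finset.mul_sum, ← Finset.mul_sum]
      simp only [Finset.sum_add_distrib, Finset.sum_sub_distrib, ← Finset.mul_sum, hP,
        Finset.sum_const, Finset.card_univ, Fintype.card_fin, nsmul_eq_mul]
      ring
    unfold Dop
    rw [Finset.sum_congr rfl fun i _ => e i]
    simp only [← Finset.mul_sum, Finset.sum_add_distrib, Finset.sum_sub_distrib,
      ← Finset.sum_mul, hk]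
    ring
  have h1 : W1 B N h k = (((B : ℝ)) ^ 2)⁻¹ * ((∑ i, k i * ∑ t, k t * h i t)
      - (B : ℝ) * ((B : ℝ) - 1) / ((N : ℝ)) ^ 2 * (∑ i, ∑ t, h i t)
      - (B : ℝ) / N * ∑ i, h i i) := by
    unfold W1 mMoment
    simp only [sub_mul, add_mul, Finset.sum_sub_distrib, Finset.sum_add_distrib, ite_mul,
      zero_mul, Finset.sum_ite_eq, Finset.mem_univ, if_true, mul_assoc, ← Finset.mul_sum]
    ring
  have h2 : W2 B N h k = (((B : ℝ)) ^ 2)⁻¹ * ((∑ i, k i * ∑ t, h i t)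
      - (B : ℝ) / N * (∑ i, ∑ t, h i t)) := by
    unfold W2
    simp only [← Finset.mul_sum, sub_mul, Finset.sum_sub_distrib]
  have h3 : W3 B N h k = (((B : ℝ)) ^ 2)⁻¹ * ((∑ i, k i * h i i)
      - (B : ℝ) / N * (∑ i, h i i)) := by
    unfold W3
    simp only [← Finset.mul_sum, sub_mul, Finset.sum_sub_distrib]
  rw [hL, h1, h2, h3]
  field_simp
  ring
end

section
/- Theorem 2 (normal approximation of gKSS² under the Bernoulli null): there is an absolute constant C > 0 with the following property. For every N ≥ 1, every a* ∈ [0,1] and every family of symmetric functions l_1,…,l_N : {0,1}×{0,1} → ℝ with l_s(0,0) = l_s(1,1) = 1 and |l_s(0,1)| ≤ 1 for all s, if σ² := Var(T) > 0 and W := (T − E[T])/σ, then sup{ |E[f(W)] − E[f(Z)]| : f : ℝ → ℝ is 1-Lipschitz } ≤ C·( 1/(σ² N^{3/2}) + 1/(σ³ N²) ), where Z is a standard normal random variable. In particular, if additionally N·σ² ≥ c₀ for some c₀ > 0, then the Wasserstein (L¹) distance between the law of W and the standard normal law is at most C·(c₀^{−1} + c₀^{−3/2})/√N, i.e. of order N^{−1/2}.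 -/
open Finset
open scoped NNReal

/-- Expectation with respect to `N` i.i.d. Bernoulli(a) coordinates. -/
noncomputable def berExp (N : ℕ) (a : ℝ) (g : (Fin N → Bool) → ℝ) : ℝ :=
  ∑ ω : Fin N → Bool, (∏ s : Fin N, if ω s then a else 1 - a) * g ω

/-- The squared graph kernel Stein statistic of `ER(a)` with a product kernel:
`T = (1/N²)[ Σ_{s≠s'} (a−Y_s)(a−Y_{s'})(l_s(1,Y_s)−l_s(0,Y_s))(l_{s'}(1,Y_{s'})−l_{s'}(0,Y_{s'}))
  + Σ_s (a−Y_s)²(2 − 2 l_s(0,1)) ]`. -/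
noncomputable def Tstat (N : ℕ) (a : ℝ) (l : Fin N → Bool → Bool → ℝ)
    (ω : Fin N → Bool) : ℝ :=
  (((N : ℝ)) ^ 2)⁻¹ *
    ((∑ s : Fin N, ∑ s' : Fin N,
        if s ≠ s' then
          (a - bval (ω s)) * (a - bval (ω s')) * (l s true (ω s) - l s false (ω s)) *
            (l s' true (ω s') - l s' false (ω s'))
        else 0) +
      ∑ s : Fin N, (a - bval (ω s)) ^ 2 * (2 - 2 * l s false true))

/-- The variance of `T` under the Bernoulli(a) product measure. -/
noncomputable def varT (N : ℕ) (a : ℝ) (l : Fin N → Bool → Bool → ℝ) : ℝ :=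
  berExp N a (fun ω => (Tstat N a l ω) ^ 2) - (berExp N a (Tstat N a l)) ^ 2

/-- The standardised statistic `W = (T − E[T])/σ`. -/
noncomputable def Wstat (N : ℕ) (a : ℝ) (l : Fin N → Bool → Bool → ℝ)
    (ω : Fin N → Bool) : ℝ :=
  (Tstat N a l ω - berExp N a (Tstat N a l)) / Real.sqrt (varT N a l)

section SteinPart
open MeasureTheory ProbabilityTheory Filter Topology

lemma stein_exp_tendsto : Tendsto (fun x : ℝ => Real.exp (-x ^ 2 / 2)) atTop (𝓝 0) := by
  apply Real.tendsto_exp_atBot.comp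
  have h : Tendsto (fun x : ℝ => x ^ 2 / 2) atTop atTop :=
    (tendsto_pow_atTop (two_ne_zero)).atTop_div_const (by norm_num)
  have := tendsto_neg_atTop_atBot.comp h
  refine this.congr (fun x => ?_)
  simp only [Function.comp]
  ring

lemma stein_exp_mul_tendsto : Tendsto (fun x : ℝ => Real.exp (-x ^ 2 / 2) * x) atTop (𝓝 0) := by
  have h := Real.tendsto_pow_mul_exp_neg_atTop_nhds_zero 1
  refine squeeze_zero' ?_ ?_ (h.const_mul (Real.exp 1) |>.trans (by simp))
  · filter_upwards [eventually_ge_atTop 0] with x hx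
    positivity
  · filter_upwards [eventually_ge_atTop 0] with x hx
    have : Real.exp (-x ^ 2 / 2) ≤ Real.exp 1 * Real.exp (-x) := by
      rw [← Real.exp_add]
      apply Real.exp_le_exp.mpr
      nlinarith [sq_nonneg (x - 1)]
    calc Real.exp (-x ^ 2 / 2) * x ≤ Real.exp 1 * Real.exp (-x) * x := by gcongr
      _ = _ := by ring

lemma stein_hasDerivAt_exp (x : ℝ) :
    HasDerivAt (fun x : ℝ => Real.exp (-x ^ 2 / 2)) (-x * Real.exp (-x ^ 2 / 2)) x := by
  have h : HasDerivAt (fun x : ℝ => -x ^ 2 / 2) (-x) x := by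
    have := ((hasDerivAt_pow 2 x).neg).div_const 2
    refine this.congr_deriv ?_
    norm_num
    try ring
  refine h.exp.congr_deriv ?_
  ring

lemma stein_hasDerivAt_exp' (x : ℝ) :
    HasDerivAt (fun x : ℝ => Real.exp (x ^ 2 / 2)) (x * Real.exp (x ^ 2 / 2)) x := by
  have h : HasDerivAt (fun x : ℝ => x ^ 2 / 2) (x) x := by
    have := ((hasDerivAt_pow 2 x)).div_const 2
    refine this.congr_deriv ?_
    norm_num
    try ring
  refine h.exp.congr_deriv ?_
  ring

lemma stein_barrier_up (u r : ℝ → ℝ) (p q : ℝ) (hq : 0 ≤ q)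
    (hu : ∀ x, 0 ≤ x → HasDerivAt u (x * u x + r x) x)
    (hr : ∀ x, 0 ≤ x → -(p * x + q) ≤ r x)
    (lim : Tendsto (fun x => Real.exp (-x ^ 2 / 2) * u x) atTop (𝓝 0)) :
    ∀ x, 0 ≤ x → u x ≤ p + 2 * q / (1 + x) := by
  set D : ℝ → ℝ := fun x => Real.exp (-x ^ 2 / 2) * (u x - (p + 2 * q / (1 + x))) with hD
  have hder : ∀ x, 0 ≤ x → HasDerivAt D
      (Real.exp (-x ^ 2 / 2) * (r x + p * x + 2 * q * x / (1 + x) + 2 * q / (1 + x) ^ 2)) x := by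
    intro x hx
    have hx1 : (1 + x) ≠ 0 := by positivity
    have h1 : HasDerivAt (fun x : ℝ => p + 2 * q / (1 + x)) (- (2 * q) / (1 + x) ^ 2) x := by
      have h0 : HasDerivAt (fun x : ℝ => 1 + x) 1 x := (hasDerivAt_id x).const_add 1
      have := ((hasDerivAt_const x (2 * q)).div h0 hx1).const_add p
      refine this.congr_deriv ?_
      ring
    refine HasDerivAt.congr_deriv ((stein_hasDerivAt_exp x).mul ((hu x hx).sub h1)) ?_
    field_simp
    ring
  have hmono : MonotoneOn D (Set.Ici 0) := by
    apply monotoneOn_of_deriv_nonneg (convex_Ici 0)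
    · intro x hx
      exact (hder x hx).continuousAt.continuousWithinAt
    · intro x hx
      rw [interior_Ici] at hx
      exact (hder x (le_of_lt hx)).differentiableAt.differentiableWithinAt
    · intro x hx
      rw [interior_Ici] at hx
      have hx0 : 0 ≤ x := le_of_lt hx
      rw [(hder x hx0).deriv]
      apply mul_nonneg (Real.exp_pos _).le
      have := hr x hx0
      have h2 : q ≤ 2 * q * x / (1 + x) + 2 * q / (1 + x) ^ 2 := by
        have : 2 * q * x / (1 + x) + 2 * q / (1 + x) ^ 2 - q = q * (1 + x ^ 2) / (1 + x) ^ 2 := by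
          field_simp
          ring
        have h3 : 0 ≤ q * (1 + x ^ 2) / (1 + x) ^ 2 := by positivity
        linarith
      linarith
  have hlim : Tendsto D atTop (𝓝 0) := by
    have h1 : Tendsto (fun x : ℝ => p + 2 * q / (1 + x)) atTop (𝓝 (p + 0)) := by
      apply Tendsto.const_add
      apply Tendsto.const_div_atTop
      exact tendsto_atTop_add_const_left _ _ tendsto_id
    have h2 := lim.sub (stein_exp_tendsto.mul h1)
    simp only [zero_mul, sub_zero] at h2
    refine h2.congr (fun x => ?_)
    simp only [hD]
    ring
  intro x hx
  have h : D x ≤ 0 := by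
    apply ge_of_tendsto hlim
    filter_upwards [eventually_ge_atTop x] with y hy
    exact hmono hx (le_trans hx hy) hy
  have hpos := Real.exp_pos (-x ^ 2 / 2)
  by_contra hcon
  push Not at hcon
  have : 0 < D x := mul_pos hpos (by linarith)
  linarith

lemma stein_barrier_abs (u r : ℝ → ℝ) (p q : ℝ) (hq : 0 ≤ q)
    (hu : ∀ x, 0 ≤ x → HasDerivAt u (x * u x + r x) x)
    (hr : ∀ x, 0 ≤ x → |r x| ≤ p * x + q)
    (lim : Tendsto (fun x => Real.exp (-x ^ 2 / 2) * u x) atTop (𝓝 0)) :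
    ∀ x, 0 ≤ x → |u x| ≤ p + 2 * q / (1 + x) := by
  intro x hx
  rw [abs_le']
  refine ⟨stein_barrier_up u r p q hq hu (fun x hx => (abs_le.mp (hr x hx)).1) lim x hx, ?_⟩
  refine stein_barrier_up (fun x => - u x) (fun x => - r x) p q hq ?_ ?_ ?_ x hx
  · intro y hy
    refine HasDerivAt.congr_deriv ((hu y hy).neg) ?_
    ring
  · intro y hy
    have := (abs_le.mp (hr y hy)).2
    linarith
  · have := lim.neg
    simpa using this

lemma stein_barrier (u r : ℝ → ℝ) (p q : ℝ) (hq : 0 ≤ q)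
    (hu : ∀ x, HasDerivAt u (x * u x + r x) x)
    (hr : ∀ x, |r x| ≤ p * |x| + q)
    (lim : Tendsto (fun x => Real.exp (-x ^ 2 / 2) * u x) atTop (𝓝 0))
    (lim' : Tendsto (fun x => Real.exp (-x ^ 2 / 2) * u x) atBot (𝓝 0)) :
    ∀ x, |u x| ≤ p + 2 * q / (1 + |x|) := by
  intro x
  rcases le_total 0 x with hx | hx
  · rw [abs_of_nonneg hx]
    refine stein_barrier_abs u r p q hq (fun x _ => hu x) (fun y hy => ?_) lim x hx
    have := hr y
    rwa [abs_of_nonneg hy] at this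
  · have h := stein_barrier_abs (fun y => u (-y)) (fun y => - r (-y)) p q hq
      (fun y _ => ?_) (fun y hy => ?_) ?_ (-x) (by linarith)
    · simpa [abs_of_nonpos hx] using h
    · have h1 := (hu (-y)).comp y (hasDerivAt_neg y)
      refine h1.congr_deriv ?_
      ring
    · have := hr (-y)
      rw [abs_neg, abs_of_nonneg hy] at this
      rwa [abs_neg]
    · have := lim'.comp tendsto_neg_atTop_atBot
      refine this.congr (fun y => ?_)
      simp [Function.comp]

lemma stein_lip_integrable (h : ℝ → ℝ) (hh : LipschitzWith 1 h) :
    Integrable h (gaussianReal 0 1) := by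
  have h1 : Integrable (fun x : ℝ => x) (gaussianReal 0 1) := by
    have := (memLp_id_gaussianReal (μ := 0) (v := 1) 1).integrable (by norm_num)
    exact this
  refine ((integrable_const |h 0|).add h1.abs).mono' hh.continuous.aestronglyMeasurable ?_
  refine Eventually.of_forall (fun x => ?_)
  have := hh.dist_le_mul x 0
  simp only [Real.dist_eq, NNReal.coe_one, one_mul, sub_zero] at this
  have h2 := abs_sub_abs_le_abs_sub (h x) (h 0)
  simp only [Real.norm_eq_abs, Pi.add_apply]
  linarith

lemma stein_abs_integral : ∫ z, |z| ∂(gaussianReal 0 1) ≤ 1 := by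
  have h2 : MemLp (fun x : ℝ => x) 2 (gaussianReal 0 1) := memLp_id_gaussianReal (μ := 0) (v := 1) 2
  have hv : ∫ z, z ^ 2 ∂(gaussianReal 0 1) = 1 := by
    have h := variance_fun_id_gaussianReal (μ := 0) (v := 1)
    rw [variance_eq_sub h2] at h
    simpa using h
  have hi : Integrable (fun x : ℝ => x ^ 2) (gaussianReal 0 1) := h2.integrable_sq
  calc ∫ z, |z| ∂(gaussianReal 0 1) ≤ ∫ z, (1 + z ^ 2) / 2 ∂(gaussianReal 0 1) := by
        apply integral_mono ((h2.integrable (by norm_num)).abs)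
          (((integrable_const _).add hi).div_const 2)
        intro z
        simp only [Pi.add_apply]
        nlinarith [sq_nonneg (|z| - 1), sq_abs z]
    _ = 1 := by
        rw [integral_div, integral_add (integrable_const _) hi, hv]
        simp

lemma stein_centered_bound (h : ℝ → ℝ) (hh : LipschitzWith 1 h) (x : ℝ) :
    |h x - ∫ z, h z ∂(gaussianReal 0 1)| ≤ |x| + 1 := by
  have hi := stein_lip_integrable h hh
  have h1 : Integrable (fun x : ℝ => x) (gaussianReal 0 1) := by
    have := (memLp_id_gaussianReal (μ := 0) (v := 1) 1).integrable (by norm_num)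
    exact this
  have e : h x - ∫ z, h z ∂(gaussianReal 0 1) = ∫ z, (h x - h z) ∂(gaussianReal 0 1) := by
    rw [integral_sub (integrable_const _) hi]
    simp
  rw [e]
  calc |∫ z, (h x - h z) ∂(gaussianReal 0 1)| ≤ ∫ z, |h x - h z| ∂(gaussianReal 0 1) :=
        abs_integral_le_integral_abs
    _ ≤ ∫ z, (|x| + |z|) ∂(gaussianReal 0 1) := by
        apply integral_mono (((integrable_const _).sub hi).abs) ((integrable_const _).add h1.abs)
        intro z
        have := hh.dist_le_mul x z
        simp only [Real.dist_eq, NNReal.coe_one, one_mul] at this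
        simp only [Pi.add_apply, Pi.sub_apply]
        exact this.trans (abs_sub x z)
    _ = |x| + ∫ z, |z| ∂(gaussianReal 0 1) := by
        rw [integral_add (integrable_const _) h1.abs]
        simp
    _ ≤ _ := by linarith [stein_abs_integral]

lemma stein_pdf (x : ℝ) :
    Real.exp (-x ^ 2 / 2) = √(2 * Real.pi) * gaussianPDFReal 0 1 x := by
  have : √(2 * Real.pi) ≠ 0 := by positivity
  simp only [gaussianPDFReal, NNReal.coe_one, mul_one, sub_zero]
  rw [← mul_assoc, mul_inv_cancel₀ this, one_mul]

lemma stein_kernel_integrable (h : ℝ → ℝ) (hi : Integrable h (gaussianReal 0 1)) :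
    Integrable (fun x => Real.exp (-x ^ 2 / 2) * h x) := by
  rw [gaussianReal_of_var_ne_zero _ one_ne_zero,
    integrable_withDensity_iff_integrable_smul' (measurable_gaussianPDF _ _)
      (Eventually.of_forall (fun _ => gaussianPDF_lt_top))] at hi
  refine (hi.const_mul (√(2 * Real.pi))).congr (Eventually.of_forall (fun x => ?_))
  simp only [toReal_gaussianPDF, smul_eq_mul, stein_pdf]
  ring

lemma stein_kernel_integral (h : ℝ → ℝ) :
    ∫ x, Real.exp (-x ^ 2 / 2) * h x = √(2 * Real.pi) * ∫ x, h x ∂(gaussianReal 0 1) := by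
  rw [integral_gaussianReal_eq_integral_smul one_ne_zero, ← integral_const_mul]
  congr 1
  ext x
  rw [stein_pdf, smul_eq_mul, mul_assoc]

/-- Solution of the Stein equation for a differentiable Lipschitz function. -/
lemma stein_solution (h h' : ℝ → ℝ) (hh : LipschitzWith 1 h)
    (hd : ∀ x, HasDerivAt h (h' x) x) (hb : ∀ x, |h' x| ≤ 1) :
    ∃ f f' : ℝ → ℝ, (∀ x, |f' x| ≤ 8) ∧
      (∀ x y, |f y - f x - f' x * (y - x)| ≤ 12 * (y - x) ^ 2) ∧
      (∀ x, f' x - x * f x = h x - ∫ z, h z ∂(gaussianReal 0 1)) := by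
  set m := ∫ z, h z ∂(gaussianReal 0 1) with hm
  have hi := stein_lip_integrable h hh
  have hgi : Integrable (fun x => h x - m) (gaussianReal 0 1) := hi.sub (integrable_const _)
  set k : ℝ → ℝ := fun x => Real.exp (-x ^ 2 / 2) * (h x - m) with hk
  have hki : Integrable k := stein_kernel_integrable _ hgi
  have hkz : ∫ x, k x = 0 := by
    rw [hk, stein_kernel_integral, integral_sub hi (integrable_const _)]
    simp [hm]
  have hkc : Continuous k := by
    have := hh.continuous
    fun_prop
  set G : ℝ → ℝ := fun x => (∫ t in Set.Iic 0, k t) + ∫ t in (0:ℝ)..x, k t with hG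
  have hGd : ∀ x, HasDerivAt G (k x) x := by
    intro x
    exact (intervalIntegral.integral_hasDerivAt_right (hkc.intervalIntegrable _ _)
      hkc.aestronglyMeasurable.stronglyMeasurableAtFilter hkc.continuousAt).const_add _
  have hGtop : Tendsto G atTop (𝓝 0) := by
    have h1 := (intervalIntegral_tendsto_integral_Ioi 0 hki.integrableOn
      tendsto_id).const_add (∫ t in Set.Iic 0, k t)
    rw [intervalIntegral.integral_Iic_add_Ioi hki.integrableOn hki.integrableOn, hkz] at h1
    exact h1
  have hGbot : Tendsto G atBot (𝓝 0) := by
    have h1 := (intervalIntegral_tendsto_integral_Iic 0 hki.integrableOn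
      tendsto_id).const_sub (∫ t in Set.Iic 0, k t)
    rw [sub_self] at h1
    refine h1.congr (fun x => ?_)
    simp only [hG, id]
    rw [intervalIntegral.integral_symm 0 x]
    ring
  set f : ℝ → ℝ := fun x => Real.exp (x ^ 2 / 2) * G x with hf
  have hEE : ∀ x : ℝ, Real.exp (-x ^ 2 / 2) * Real.exp (x ^ 2 / 2) = 1 := by
    intro x
    rw [← Real.exp_add, ← Real.exp_zero]
    congr 1
    ring
  have hfG : ∀ x, Real.exp (-x ^ 2 / 2) * f x = G x := by
    intro x
    rw [hf, ← mul_assoc, hEE, one_mul]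
  set f' : ℝ → ℝ := fun x => x * f x + (h x - m) with hf'
  have hfd : ∀ x, HasDerivAt f (f' x) x := by
    intro x
    refine HasDerivAt.congr_deriv ((stein_hasDerivAt_exp' x).mul (hGd x)) ?_
    simp only [hf', hf, hk]
    linear_combination (h x - m) * hEE x
  have hfb : ∀ x, |f x| ≤ 3 := by
    intro x
    have := stein_barrier f (fun x => h x - m) 1 1 zero_le_one hfd
      (fun x => by simpa using stein_centered_bound h hh x)
      (hGtop.congr (fun x => (hfG x).symm)) (hGbot.congr (fun x => (hfG x).symm)) x
    have h2 : 2 * 1 / (1 + |x|) ≤ (2:ℝ) := by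
      rw [div_le_iff₀ (by positivity)]
      nlinarith [abs_nonneg x]
    linarith
  have hfd' : ∀ x, HasDerivAt f' (x * f' x + (f x + h' x)) x := by
    intro x
    refine HasDerivAt.congr_deriv (((hasDerivAt_id x).mul (hfd x)).add ((hd x).sub_const m)) ?_
    simp only [id]
    ring
  have hf'lin : ∀ x, |f' x| ≤ 4 * |x| + 1 := by
    intro x
    have h1 := stein_centered_bound h hh x
    calc |f' x| ≤ |x * f x| + |h x - m| := abs_add_le _ _
      _ ≤ |x| * 3 + (|x| + 1) := by
        rw [abs_mul]
        gcongr
        exact hfb x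
      _ = _ := by ring
  have hlim0 : Tendsto (fun x : ℝ => Real.exp (-x ^ 2 / 2) * (4 * x + 1)) atTop (𝓝 0) := by
    have := (stein_exp_mul_tendsto.const_mul 4).add stein_exp_tendsto
    simp only [mul_zero, add_zero] at this
    refine this.congr (fun x => by ring)
  have hlim1 : Tendsto (fun x => Real.exp (-x ^ 2 / 2) * f' x) atTop (𝓝 0) := by
    refine squeeze_zero_norm' ?_ hlim0
    filter_upwards [eventually_ge_atTop 0] with x hx
    rw [norm_mul, Real.norm_eq_abs, Real.norm_eq_abs, abs_of_pos (Real.exp_pos _)]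
    gcongr
    have := hf'lin x
    rwa [abs_of_nonneg hx] at this
  have hlim2 : Tendsto (fun x => Real.exp (-x ^ 2 / 2) * f' x) atBot (𝓝 0) := by
    refine squeeze_zero_norm' ?_ (hlim0.comp tendsto_neg_atBot_atTop)
    filter_upwards [eventually_le_atBot 0] with x hx
    rw [norm_mul, Real.norm_eq_abs, Real.norm_eq_abs, abs_of_pos (Real.exp_pos _)]
    simp only [Function.comp, neg_sq]
    gcongr
    have := hf'lin x
    rwa [abs_of_nonpos hx] at this
  have hr : ∀ x, |f x + h' x| ≤ 4 := by
    intro x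
    have := abs_add_le (f x) (h' x)
    linarith [hfb x, hb x]
  have hf'b : ∀ x, |f' x| ≤ 8 / (1 + |x|) := by
    intro x
    have := stein_barrier f' (fun x => f x + h' x) 0 4 (by norm_num) hfd'
      (fun x => by simpa using hr x) hlim1 hlim2 x
    norm_num at this
    exact this
  have hf''b : ∀ x, |x * f' x + (f x + h' x)| ≤ 12 := by
    intro x
    have h1 : |x * f' x| ≤ 8 := by
      rw [abs_mul]
      calc |x| * |f' x| ≤ |x| * (8 / (1 + |x|)) := by gcongr; exact hf'b x
        _ ≤ 8 := by
          rw [← mul_div_assoc, div_le_iff₀ (by positivity)]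
          nlinarith [abs_nonneg x]
    have := abs_add_le (x * f' x) (f x + h' x)
    linarith [hr x]
  have hf'L : ∀ x y, |f' y - f' x| ≤ 12 * |y - x| := by
    intro x y
    have := convex_univ.norm_image_sub_le_of_norm_hasDerivWithin_le
      (fun x _ => (hfd' x).hasDerivWithinAt) (fun x _ => hf''b x) (Set.mem_univ x) (Set.mem_univ y)
    simpa using this
  refine ⟨f, f', ?_, ?_, ?_⟩
  · intro x
    refine (hf'b x).trans ?_
    rw [div_le_iff₀ (by positivity)]
    nlinarith [abs_nonneg x]
  · intro x y
    have := (convex_uIcc x y).norm_image_sub_le_of_norm_hasDerivWithin_le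
      (f := fun t => f t - f' x * t) (f' := fun t => f' t - f' x * 1) (C := 12 * |y - x|)
      (fun t _ => ((hfd t).sub ((hasDerivAt_id t).const_mul (f' x))).hasDerivWithinAt)
      (fun t ht => ?_) Set.left_mem_uIcc Set.right_mem_uIcc
    · simp only [Real.norm_eq_abs] at this
      rw [mul_assoc, ← pow_two, sq_abs] at this
      convert this using 2
      ring
    · rw [mul_one, Real.norm_eq_abs]
      refine (hf'L x t).trans ?_
      have := Set.abs_sub_left_of_mem_uIcc ht
      gcongr
  · intro x
    simp only [hf']
    ring

/-- Smoothing of Lipschitz functions. -/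
lemma stein_smooth (h : ℝ → ℝ) (hh : LipschitzWith 1 h) (ε : ℝ) (hε : 0 < ε) :
    ∃ g g' : ℝ → ℝ, LipschitzWith 1 g ∧ (∀ x, HasDerivAt g (g' x) x) ∧ (∀ x, |g' x| ≤ 1) ∧
      ∀ x, |g x - h x| ≤ ε := by
  have hc := hh.continuous
  have hl : ∀ x y, |h x - h y| ≤ |x - y| := by
    intro x y
    have := hh.dist_le_mul x y
    simpa only [Real.dist_eq, NNReal.coe_one, one_mul] using this
  set H : ℝ → ℝ := fun x => ∫ t in (0:ℝ)..x, h t with hH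
  have hHd : ∀ x, HasDerivAt H (h x) x := by
    intro x
    exact (intervalIntegral.integral_hasDerivAt_right (hc.intervalIntegrable _ _)
      hc.aestronglyMeasurable.stronglyMeasurableAtFilter hc.continuousAt)
  have hgd : ∀ x, HasDerivAt (fun x => (H (x + ε) - H x) / ε) ((h (x + ε) - h x) / ε) x := by
    intro x
    have h1 : HasDerivAt (fun x => H (x + ε)) (h (x + ε)) x := (hHd (x + ε)).comp_add_const x ε
    exact (h1.sub (hHd x)).div_const ε
  have hgb : ∀ x, |(h (x + ε) - h x) / ε| ≤ 1 := by
    intro x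
    rw [abs_div, abs_of_pos hε, div_le_one hε]
    refine (hl _ _).trans ?_
    rw [add_sub_cancel_left, abs_of_pos hε]
  refine ⟨_, _, ?_, hgd, hgb, ?_⟩
  · apply lipschitzWith_of_nnnorm_deriv_le (fun x => (hgd x).differentiableAt)
    intro x
    rw [(hgd x).deriv, ← NNReal.coe_le_coe]
    exact hgb x
  · intro x
    have e : (H (x + ε) - H x) / ε - h x = (∫ t in x..(x + ε), (h t - h x)) / ε := by
      rw [intervalIntegral.integral_sub (hc.intervalIntegrable _ _) (by simp),
        intervalIntegral.integral_const]
      have : H (x + ε) - H x = ∫ t in x..(x + ε), h t := by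
        rw [hH]
        exact intervalIntegral.integral_interval_sub_left (hc.intervalIntegrable _ _)
          (hc.intervalIntegrable _ _)
      rw [this, smul_eq_mul]
      field_simp
      ring
    rw [e, abs_div, abs_of_pos hε, div_le_iff₀ hε]
    have := intervalIntegral.norm_integral_le_of_norm_le_const (a := x) (b := x + ε) (C := ε)
      (f := fun t => h t - h x) (fun t ht => ?_)
    · simpa [abs_of_pos hε] using this
    · rw [Set.uIoc_of_le (by linarith)] at ht
      refine (hl _ _).trans ?_
      rw [abs_of_pos (by linarith [ht.1])]
      linarith [ht.2]

end SteinPart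

section ProbPart

noncomputable def berW (N : ℕ) (a : ℝ) (ω : Fin N → Bool) : ℝ :=
  ∏ s : Fin N, if ω s then a else 1 - a

lemma berExp_eq (N : ℕ) (a : ℝ) (g : (Fin N → Bool) → ℝ) :
    berExp N a g = ∑ ω, berW N a ω * g ω := rfl

lemma berW_nonneg {N : ℕ} {a : ℝ} (ha : a ∈ Set.Icc (0 : ℝ) 1) (ω : Fin N → Bool) :
    0 ≤ berW N a ω := by
  apply Finset.prod_nonneg
  intro s _
  split_ifs
  · exact ha.1
  · linarith [ha.2]

lemma berExp_add (N : ℕ) (a : ℝ) (g k : (Fin N → Bool) → ℝ) :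
    berExp N a (fun ω => g ω + k ω) = berExp N a g + berExp N a k := by
  simp only [berExp_eq, mul_add, Finset.sum_add_distrib]

lemma berExp_sub (N : ℕ) (a : ℝ) (g k : (Fin N → Bool) → ℝ) :
    berExp N a (fun ω => g ω - k ω) = berExp N a g - berExp N a k := by
  simp only [berExp_eq, mul_sub, Finset.sum_sub_distrib]

lemma berExp_smul (N : ℕ) (a c : ℝ) (g : (Fin N → Bool) → ℝ) :
    berExp N a (fun ω => c * g ω) = c * berExp N a g := by
  simp only [berExp_eq, Finset.mul_sum]
  exact Finset.sum_congr rfl (fun ω _ => by ring)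

lemma berExp_sum (N : ℕ) (a : ℝ) {ι : Type*} (S : Finset ι) (g : ι → (Fin N → Bool) → ℝ) :
    berExp N a (fun ω => ∑ i ∈ S, g i ω) = ∑ i ∈ S, berExp N a (g i) := by
  simp only [berExp_eq, Finset.mul_sum]
  exact Finset.sum_comm

lemma berExp_insertNth (N : ℕ) (a : ℝ) (s : Fin (N + 1)) (g : (Fin (N + 1) → Bool) → ℝ) :
    berExp (N + 1) a g = a * berExp N a (fun ω => g (s.insertNth true ω)) +
      (1 - a) * berExp N a (fun ω => g (s.insertNth false ω)) := by
  unfold berExp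
  rw [← (Fin.insertNthEquiv (fun _ => Bool) s).sum_comp, Fintype.sum_prod_type]
  simp only [Fintype.sum_bool, Finset.mul_sum]
  congr 1
  · refine Finset.sum_congr rfl (fun ω _ => ?_)
    rw [Fin.prod_univ_succAbove _ s]
    simp [Fin.insertNthEquiv, mul_assoc]
  · refine Finset.sum_congr rfl (fun ω _ => ?_)
    rw [Fin.prod_univ_succAbove _ s]
    simp [Fin.insertNthEquiv, mul_assoc]

lemma berExp_const (N : ℕ) (a c : ℝ) : berExp N a (fun _ => c) = c := by
  induction N with
  | zero => simp [berExp]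
  | succ N ih =>
    rw [berExp_insertNth N a 0, ih]
    ring

lemma berExp_mono {N : ℕ} {a : ℝ} (ha : a ∈ Set.Icc (0 : ℝ) 1) {g k : (Fin N → Bool) → ℝ}
    (h : ∀ ω, g ω ≤ k ω) : berExp N a g ≤ berExp N a k := by
  simp only [berExp_eq]
  exact Finset.sum_le_sum (fun ω _ => mul_le_mul_of_nonneg_left (h ω) (berW_nonneg ha ω))

lemma berExp_abs_le {N : ℕ} {a : ℝ} (ha : a ∈ Set.Icc (0 : ℝ) 1) (g : (Fin N → Bool) → ℝ) :
    |berExp N a g| ≤ berExp N a (fun ω => |g ω|) := by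
  simp only [berExp_eq]
  refine (Finset.abs_sum_le_sum_abs _ _).trans (le_of_eq ?_)
  refine Finset.sum_congr rfl (fun ω _ => ?_)
  rw [abs_mul, abs_of_nonneg (berW_nonneg ha ω)]

lemma berExp_abs_le_const {N : ℕ} {a : ℝ} (ha : a ∈ Set.Icc (0 : ℝ) 1) (g : (Fin N → Bool) → ℝ)
    (c : ℝ) (h : ∀ ω, |g ω| ≤ c) : |berExp N a g| ≤ c :=
  (berExp_abs_le ha g).trans ((berExp_mono ha h).trans (berExp_const N a c).le)

lemma berExp_var_eq (N : ℕ) (a : ℝ) (g : (Fin N → Bool) → ℝ) :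
    berExp N a (fun ω => (g ω - berExp N a g) ^ 2) =
      berExp N a (fun ω => g ω ^ 2) - (berExp N a g) ^ 2 := by
  have : (fun ω => (g ω - berExp N a g) ^ 2) =
      fun ω => (g ω ^ 2 + (-2 * berExp N a g) * g ω) + (berExp N a g) ^ 2 := by
    ext ω
    ring
  rw [this, berExp_add, berExp_add, berExp_smul, berExp_const]
  ring

lemma berExp_sq_le {N : ℕ} {a : ℝ} (ha : a ∈ Set.Icc (0 : ℝ) 1) (g : (Fin N → Bool) → ℝ) :
    (berExp N a g) ^ 2 ≤ berExp N a (fun ω => g ω ^ 2) := by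
  have h := berExp_var_eq N a g
  have h2 : 0 ≤ berExp N a (fun ω => (g ω - berExp N a g) ^ 2) := by
    have := berExp_mono ha (g := fun _ => 0) (fun ω => sq_nonneg (g ω - berExp N a g))
    rwa [berExp_const] at this
  linarith

lemma berExp_resample {N : ℕ} (a : ℝ) (s : Fin N) (g : (Fin N → Bool) → ℝ) :
    berExp N a g = berExp N a (fun ω => a * g (Function.update ω s true) +
      (1 - a) * g (Function.update ω s false)) := by
  cases N with
  | zero => exact s.elim0
  | succ N =>
    rw [berExp_insertNth N a s, berExp_insertNth N a s]
    simp only [Fin.update_insertNth]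
    rw [berExp_add, berExp_smul, berExp_smul]
    ring

/-- A bounded difference variance bound (Efron and Stein). -/
lemma berExp_variance_le {a : ℝ} (ha : a ∈ Set.Icc (0 : ℝ) 1) (c : ℝ) :
    ∀ (N : ℕ) (g : (Fin N → Bool) → ℝ),
    (∀ ω s b, |g (Function.update ω s b) - g ω| ≤ c) →
    berExp N a (fun ω => g ω ^ 2) - (berExp N a g) ^ 2 ≤ N * c ^ 2 := by
  intro N
  induction N with
  | zero =>
    intro g _
    simp [berExp]
  | succ N ih =>
    intro g hg
    rw [berExp_insertNth N a 0, berExp_insertNth N a 0]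
    have h1 := ih (fun ω => g ((0 : Fin (N + 1)).insertNth true ω)) (fun ω s b => by
      rw [Fin.insertNth_update]
      exact hg _ _ _)
    have h2 := ih (fun ω => g ((0 : Fin (N + 1)).insertNth false ω)) (fun ω s b => by
      rw [Fin.insertNth_update]
      exact hg _ _ _)
    have h3 : |berExp N a (fun ω => g ((0 : Fin (N + 1)).insertNth true ω)) -
        berExp N a (fun ω => g ((0 : Fin (N + 1)).insertNth false ω))| ≤ c := by
      rw [← berExp_sub]
      apply berExp_abs_le_const ha
      intro ω
      have := hg ((0 : Fin (N + 1)).insertNth false ω) 0 true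
      rwa [Fin.update_insertNth] at this
    set x := berExp N a (fun ω => g ((0 : Fin (N + 1)).insertNth true ω))
    set y := berExp N a (fun ω => g ((0 : Fin (N + 1)).insertNth false ω))
    have h4 : (x - y) ^ 2 ≤ c ^ 2 := by
      rw [← sq_abs (x - y)]
      exact pow_le_pow_left₀ (abs_nonneg _) h3 2
    obtain ⟨ha0, ha1⟩ := ha
    have ha2 : 0 ≤ 1 - a := by linarith
    have e1 := mul_le_mul_of_nonneg_left h1 ha0
    have e2 := mul_le_mul_of_nonneg_left h2 ha2
    have e3 := mul_le_mul_of_nonneg_left h4 (mul_nonneg ha0 ha2)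
    have e4 : a * (1 - a) * c ^ 2 ≤ c ^ 2 := by
      have : a * (1 - a) ≤ 1 := by nlinarith
      nlinarith [sq_nonneg c]
    push_cast
    nlinarith

/-- Centered coordinate. -/
noncomputable def bxi {N : ℕ} (a : ℝ) (s : Fin N) (ω : Fin N → Bool) : ℝ := bval (ω s) - a

lemma bxi_abs {N : ℕ} {a : ℝ} (ha : a ∈ Set.Icc (0 : ℝ) 1) (s : Fin N) (ω : Fin N → Bool) :
    |bxi a s ω| ≤ 1 := by
  obtain ⟨h0, h1⟩ := ha
  unfold bxi bval
  split_ifs <;> rw [abs_le] <;> constructor <;> linarith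

lemma bdelta_abs (b b' : Bool) : |bval b - bval b'| ≤ 1 := by
  cases b <;> cases b' <;> simp [bval]

lemma bxi_update {N : ℕ} (a : ℝ) (s t : Fin N) (b : Bool) (ω : Fin N → Bool) :
    bxi a t (Function.update ω s b) =
      bxi a t ω + (if t = s then bval b - bval (ω s) else 0) := by
  unfold bxi
  by_cases h : t = s
  · subst h
    simp
  · simp [h]

lemma berExp_bxi_mul {N : ℕ} (a : ℝ) (s : Fin N) (G : (Fin N → Bool) → ℝ)
    (hG : ∀ ω b, G (Function.update ω s b) = G ω) :
    berExp N a (fun ω => bxi a s ω * G ω) = 0 := by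
  rw [berExp_resample a s]
  have : (fun ω : Fin N → Bool => a * (bxi a s (Function.update ω s true) *
      G (Function.update ω s true)) + (1 - a) * (bxi a s (Function.update ω s false) *
      G (Function.update ω s false))) = fun _ => 0 := by
    ext ω
    rw [hG, hG]
    simp [bxi, bval]
    ring
  rw [this, berExp_const]

/-- Linear coefficient with `k` times the interaction. -/
noncomputable def bA {N : ℕ} (a : ℝ) (α : Fin N → ℝ) (β : Fin N → Fin N → ℝ) (k : ℝ)
    (s : Fin N) (ω : Fin N → Bool) : ℝ := α s + k * ∑ t, β s t * bxi a t ω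

noncomputable def bT {N : ℕ} (a : ℝ) (α : Fin N → ℝ) (β : Fin N → Fin N → ℝ)
    (ω : Fin N → Bool) : ℝ := ∑ s, bxi a s ω * bA a α β 1 s ω

noncomputable def bTau {N : ℕ} (a : ℝ) (α : Fin N → ℝ) (β : Fin N → Fin N → ℝ)
    (ω : Fin N → Bool) : ℝ := ∑ s, bxi a s ω ^ 2 * (bA a α β 1 s ω * bA a α β 2 s ω)

lemma bA_update {N : ℕ} (a : ℝ) (α : Fin N → ℝ) (β : Fin N → Fin N → ℝ) (k : ℝ)
    (s t : Fin N) (b : Bool) (ω : Fin N → Bool) :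
    bA a α β k t (Function.update ω s b) =
      bA a α β k t ω + k * (β t s * (bval b - bval (ω s))) := by
  unfold bA
  simp only [bxi_update, mul_add, Finset.sum_add_distrib]
  simp
  ring

lemma bT_update {N : ℕ} (a : ℝ) (α : Fin N → ℝ) (β : Fin N → Fin N → ℝ)
    (hsymm : ∀ s t, β s t = β t s) (hdiag : ∀ s, β s s = 0)
    (s : Fin N) (b : Bool) (ω : Fin N → Bool) :
    bT a α β (Function.update ω s b) =
      bT a α β ω + (bval b - bval (ω s)) * bA a α β 2 s ω := by
  unfold bT
  simp only [bA_update, bxi_update, add_mul, mul_add, Finset.sum_add_distrib]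
  simp only [ite_mul, zero_mul, Finset.sum_ite_eq', Finset.mem_univ, if_true, hdiag]
  have : ∑ t, bxi a t ω * (1 * (β t s * (bval b - bval (ω s)))) =
      (bval b - bval (ω s)) * ∑ t, β s t * bxi a t ω := by
    rw [Finset.mul_sum]
    refine Finset.sum_congr rfl (fun t _ => ?_)
    rw [hsymm s t]
    ring
  rw [this]
  unfold bA
  ring

lemma bA_abs {N : ℕ} (hN : 1 ≤ N) {a : ℝ} (ha : a ∈ Set.Icc (0 : ℝ) 1)
    (α : Fin N → ℝ) (β : Fin N → Fin N → ℝ) (M : ℝ)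
    (hα : ∀ s, |α s| ≤ M / N) (hβ : ∀ s t, |β s t| ≤ M / N ^ 2) (k : ℝ) (hk : 0 ≤ k) (hk2 : k ≤ 2)
    (s : Fin N) (ω : Fin N → Bool) : |bA a α β k s ω| ≤ 3 * M / N := by
  have hN0 : (0 : ℝ) < N := by exact_mod_cast hN
  have hM : 0 ≤ M / N := (abs_nonneg _).trans (hα s)
  have h1 : |∑ t, β s t * bxi a t ω| ≤ M / N := by
    calc |∑ t, β s t * bxi a t ω| ≤ ∑ t, |β s t * bxi a t ω| := Finset.abs_sum_le_sum_abs _ _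
      _ ≤ ∑ t : Fin N, M / N ^ 2 := by
        refine Finset.sum_le_sum (fun t _ => ?_)
        rw [abs_mul]
        calc |β s t| * |bxi a t ω| ≤ |β s t| * 1 := by
              gcongr
              exact bxi_abs ha t ω
          _ ≤ _ := by rw [mul_one]; exact hβ s t
      _ = M / N := by
        simp
        field_simp
  unfold bA
  calc |α s + k * ∑ t, β s t * bxi a t ω| ≤ |α s| + |k * ∑ t, β s t * bxi a t ω| := abs_add_le _ _
    _ ≤ M / N + 2 * (M / N) := by
      rw [abs_mul, abs_of_nonneg hk]
      gcongr
      exact hα s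
    _ = _ := by ring

lemma bStein {N : ℕ} (hN : 1 ≤ N) {a : ℝ} (ha : a ∈ Set.Icc (0 : ℝ) 1)
    (α : Fin N → ℝ) (β : Fin N → Fin N → ℝ)
    (hsymm : ∀ s t, β s t = β t s) (hdiag : ∀ s, β s s = 0) (M : ℝ)
    (hα : ∀ s, |α s| ≤ M / N) (hβ : ∀ s t, |β s t| ≤ M / N ^ 2)
    (F F' : ℝ → ℝ) (K : ℝ) (hK : 0 ≤ K)
    (hF : ∀ x y, |F y - F x - F' x * (y - x)| ≤ K * (y - x) ^ 2) :
    |berExp N a (fun ω => bT a α β ω * F (bT a α β ω)) -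
      berExp N a (fun ω => bTau a α β ω * F' (bT a α β ω))| ≤ N * (K * (3 * M / N) ^ 3) := by
  set R : Fin N → (Fin N → Bool) → ℝ := fun s ω => bT a α β ω - bxi a s ω * bA a α β 2 s ω with hR
  have hz : ∀ s, berExp N a (fun ω => bxi a s ω * (bA a α β 1 s ω * F (R s ω))) = 0 := by
    intro s
    apply berExp_bxi_mul
    intro ω b
    have e : R s (Function.update ω s b) = R s ω := by
      simp only [hR]
      rw [bT_update a α β hsymm hdiag, bA_update, bxi_update, hdiag]
      simp
      ring
    rw [e, bA_update, hdiag]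
    ring
  have e1 : berExp N a (fun ω => bT a α β ω * F (bT a α β ω)) =
      berExp N a (fun ω => ∑ s, bxi a s ω * (bA a α β 1 s ω * (F (bT a α β ω) - F (R s ω)))) := by
    have : (fun ω => ∑ s, bxi a s ω * (bA a α β 1 s ω * (F (bT a α β ω) - F (R s ω)))) =
        fun ω => bT a α β ω * F (bT a α β ω) -
          ∑ s, bxi a s ω * (bA a α β 1 s ω * F (R s ω)) := by
      ext ω
      conv_rhs => rw [bT, Finset.sum_mul, ← Finset.sum_sub_distrib]
      refine Finset.sum_congr rfl (fun s _ => ?_)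
      rw [← bT]
      ring
    rw [this, berExp_sub, berExp_sum, Finset.sum_eq_zero (fun s _ => hz s), sub_zero]
  rw [e1, ← berExp_sub]
  apply berExp_abs_le_const ha
  intro ω
  rw [bTau, Finset.sum_mul, ← Finset.sum_sub_distrib]
  refine (Finset.abs_sum_le_sum_abs _ _).trans ?_
  have hterm : ∀ s ∈ (Finset.univ : Finset (Fin N)),
      |bxi a s ω * (bA a α β 1 s ω * (F (bT a α β ω) - F (R s ω))) -
        bxi a s ω ^ 2 * (bA a α β 1 s ω * bA a α β 2 s ω) * F' (bT a α β ω)| ≤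
        K * (3 * M / N) ^ 3 := by
    intro s _
    have hA := bA_abs hN ha α β M hα hβ 1 (by norm_num) (by norm_num) s ω
    have hD := bA_abs hN ha α β M hα hβ 2 (by norm_num) (by norm_num) s ω
    have hx := bxi_abs ha s ω
    have hf := hF (bT a α β ω) (R s ω)
    have hRs : R s ω - bT a α β ω = - (bxi a s ω * bA a α β 2 s ω) := by
      simp only [hR]
      ring
    rw [hRs] at hf
    have e : bxi a s ω * (bA a α β 1 s ω * (F (bT a α β ω) - F (R s ω))) -
        bxi a s ω ^ 2 * (bA a α β 1 s ω * bA a α β 2 s ω) * F' (bT a α β ω) =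
        - (bxi a s ω * bA a α β 1 s ω * (F (R s ω) - F (bT a α β ω) -
          F' (bT a α β ω) * -(bxi a s ω * bA a α β 2 s ω))) := by ring
    rw [e, abs_neg, abs_mul, abs_mul]
    have hsq : (-(bxi a s ω * bA a α β 2 s ω)) ^ 2 ≤ (3 * M / N) ^ 2 := by
      rw [← sq_abs, abs_neg, abs_mul]
      apply pow_le_pow_left₀ (by positivity)
      calc |bxi a s ω| * |bA a α β 2 s ω| ≤ 1 * (3 * M / N) := by gcongr
        _ = _ := one_mul _
    have hB : 0 ≤ 3 * M / N := (abs_nonneg _).trans hA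
    calc _ ≤ 1 * (3 * M / N) * (K * (3 * M / N) ^ 2) := by
          gcongr
          exact hf.trans (by gcongr)
      _ = _ := by ring
  refine (Finset.sum_le_sum hterm).trans ?_
  simp

lemma bTau_diff {N : ℕ} (hN : 1 ≤ N) {a : ℝ} (ha : a ∈ Set.Icc (0 : ℝ) 1)
    (α : Fin N → ℝ) (β : Fin N → Fin N → ℝ) (hdiag : ∀ s, β s s = 0) (M : ℝ)
    (hα : ∀ s, |α s| ≤ M / N) (hβ : ∀ s t, |β s t| ≤ M / N ^ 2)
    (ω : Fin N → Bool) (s : Fin N) (b : Bool) :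
    |bTau a α β (Function.update ω s b) - bTau a α β ω| ≤ 18 * M ^ 2 / N ^ 2 := by
  have hN0 : (0 : ℝ) < N := by exact_mod_cast hN
  unfold bTau
  rw [← Finset.sum_sub_distrib]
  refine (Finset.abs_sum_le_sum_abs _ _).trans ?_
  have hM0 : 0 ≤ M / N := (abs_nonneg _).trans (hα s)
  have hM : 0 ≤ M := by
    have := mul_nonneg hM0 hN0.le
    rwa [div_mul_cancel₀ _ hN0.ne'] at this
  have hterm : ∀ t ∈ (Finset.univ : Finset (Fin N)),
      |bxi a t (Function.update ω s b) ^ 2 * (bA a α β 1 t (Function.update ω s b) *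
        bA a α β 2 t (Function.update ω s b)) - bxi a t ω ^ 2 *
          (bA a α β 1 t ω * bA a α β 2 t ω)| ≤
        (if t = s then (3 * M / N) ^ 2 else 0) + 9 * M ^ 2 / N ^ 3 := by
    intro t _
    have hA := bA_abs hN ha α β M hα hβ 1 (by norm_num) (by norm_num) t ω
    have hD := bA_abs hN ha α β M hα hβ 2 (by norm_num) (by norm_num) t ω
    have hA' := bA_abs hN ha α β M hα hβ 1 (by norm_num) (by norm_num) t (Function.update ω s b)
    have hx := bxi_abs ha t ω
    by_cases h : t = s
    · have hx' := bxi_abs ha t (Function.update ω s b)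
      subst h
      rw [if_pos rfl, bA_update, bA_update, hdiag]
      have e : bxi a t (Function.update ω t b) ^ 2 *
          ((bA a α β 1 t ω + 1 * (0 * (bval b - bval (ω t)))) *
          (bA a α β 2 t ω + 2 * (0 * (bval b - bval (ω t))))) -
          bxi a t ω ^ 2 * (bA a α β 1 t ω * bA a α β 2 t ω) =
          (bxi a t (Function.update ω t b) ^ 2 - bxi a t ω ^ 2) *
            (bA a α β 1 t ω * bA a α β 2 t ω) := by ring
      rw [e, abs_mul, abs_mul]
      have h1 : |bxi a t (Function.update ω t b) ^ 2 - bxi a t ω ^ 2| ≤ 1 := by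
        have i1 := (sq_le_one_iff_abs_le_one _).mpr hx
        have i2 := (sq_le_one_iff_abs_le_one _).mpr hx'
        rw [abs_le]
        constructor <;> nlinarith [sq_nonneg (bxi a t ω), sq_nonneg (bxi a t (Function.update ω t b))]
      have h2 : 0 ≤ 9 * M ^ 2 / (N : ℝ) ^ 3 := by positivity
      calc _ ≤ 1 * ((3 * M / N) * (3 * M / N)) := by gcongr
        _ = (3 * M / N) ^ 2 := by ring
        _ ≤ _ := by linarith
    · rw [if_neg h, zero_add, bxi_update, if_neg h, add_zero]
      have e1 := bA_update a α β 1 s t b ω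
      have e2 := bA_update a α β 2 s t b ω
      have hb : |β t s * (bval b - bval (ω s))| ≤ M / N ^ 2 := by
        rw [abs_mul]
        calc |β t s| * |bval b - bval (ω s)| ≤ |β t s| * 1 := by
              gcongr
              exact bdelta_abs _ _
          _ ≤ _ := by rw [mul_one]; exact hβ t s
      set d := β t s * (bval b - bval (ω s))
      have e : bxi a t ω ^ 2 * (bA a α β 1 t (Function.update ω s b) *
        bA a α β 2 t (Function.update ω s b)) - bxi a t ω ^ 2 *
          (bA a α β 1 t ω * bA a α β 2 t ω) =
          bxi a t ω ^ 2 * (2 * (bA a α β 1 t (Function.update ω s b) * d) +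
            d * bA a α β 2 t ω) := by
        rw [e2, e1]
        ring
      rw [e, abs_mul, abs_pow]
      calc _ ≤ (1:ℝ) ^ 2 * (2 * ((3 * M / N) * (M / N ^ 2)) + (M / N ^ 2) * (3 * M / N)) := by
            gcongr
            refine (abs_add_le _ _).trans ?_
            have k1 : |2 * (bA a α β 1 t (Function.update ω s b) * d)| ≤
                2 * ((3 * M / N) * (M / N ^ 2)) := by
              rw [abs_mul, abs_mul, abs_of_pos (by norm_num : (0:ℝ) < 2)]
              exact mul_le_mul_of_nonneg_left (mul_le_mul hA' hb (abs_nonneg _) (by positivity))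
                (by norm_num)
            have k2 : |d * bA a α β 2 t ω| ≤ (M / N ^ 2) * (3 * M / N) := by
              rw [abs_mul]
              exact mul_le_mul hb hD (abs_nonneg _) (by positivity)
            exact add_le_add k1 k2
        _ = _ := by
          field_simp
          ring
  refine (Finset.sum_le_sum hterm).trans (le_of_eq ?_)
  rw [Finset.sum_add_distrib]
  simp
  field_simp
  ring

lemma bTau_l1 {N : ℕ} (hN : 1 ≤ N) {a : ℝ} (ha : a ∈ Set.Icc (0 : ℝ) 1)
    (α : Fin N → ℝ) (β : Fin N → Fin N → ℝ) (hdiag : ∀ s, β s s = 0) (M : ℝ)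
    (hα : ∀ s, |α s| ≤ M / N) (hβ : ∀ s t, |β s t| ≤ M / N ^ 2) :
    berExp N a (fun ω => |bTau a α β ω - berExp N a (bTau a α β)|) ≤
      18 * M ^ 2 / (N * Real.sqrt N) := by
  have hN0 : (0 : ℝ) < N := by exact_mod_cast hN
  have h1 := berExp_variance_le ha _ N (bTau a α β) (bTau_diff hN ha α β hdiag M hα hβ)
  rw [← berExp_var_eq] at h1
  have h2 := berExp_sq_le ha (fun ω => |bTau a α β ω - berExp N a (bTau a α β)|)
  simp only [sq_abs] at h2
  apply le_of_sq_le_sq _ (by positivity)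
  refine (h2.trans h1).trans (le_of_eq ?_)
  rw [div_pow, div_pow, mul_pow _ (Real.sqrt N), Real.sq_sqrt hN0.le]
  field_simp

lemma bStein_lip {N : ℕ} (hN : 1 ≤ N) {a : ℝ} (ha : a ∈ Set.Icc (0 : ℝ) 1)
    (α : Fin N → ℝ) (β : Fin N → Fin N → ℝ)
    (hsymm : ∀ s t, β s t = β t s) (hdiag : ∀ s, β s s = 0) (M : ℝ)
    (hα : ∀ s, |α s| ≤ M / N) (hβ : ∀ s t, |β s t| ≤ M / N ^ 2)
    (σ : ℝ) (hσ : 0 < σ) (hσ2 : berExp N a (fun ω => bT a α β ω ^ 2) = σ ^ 2)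
    (h : ℝ → ℝ) (hh : LipschitzWith 1 h) :
    |berExp N a (fun ω => h (bT a α β ω / σ)) -
      ∫ z, h z ∂(ProbabilityTheory.gaussianReal 0 1)| ≤
      144 * M ^ 2 / (σ ^ 2 * (N * Real.sqrt N)) + 324 * M ^ 3 / (σ ^ 3 * N ^ 2) := by
  have hN0 : (0 : ℝ) < N := by exact_mod_cast hN
  have hτ : berExp N a (bTau a α β) = σ ^ 2 := by
    have := bStein hN ha α β hsymm hdiag M hα hβ (fun x => x) (fun _ => 1) 0 le_rfl
      (fun x y => by simp)
    simp only [zero_mul, mul_zero, mul_one, ← pow_two] at this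
    rw [hσ2] at this
    have := abs_eq_zero.mp (le_antisymm this (abs_nonneg _))
    linarith
  have main : ∀ g g' : ℝ → ℝ, LipschitzWith 1 g → (∀ x, HasDerivAt g (g' x) x) →
      (∀ x, |g' x| ≤ 1) → |berExp N a (fun ω => g (bT a α β ω / σ)) -
      ∫ z, g z ∂(ProbabilityTheory.gaussianReal 0 1)| ≤
      144 * M ^ 2 / (σ ^ 2 * (N * Real.sqrt N)) + 324 * M ^ 3 / (σ ^ 3 * N ^ 2) := by
    intro g g' hg hd hb
    obtain ⟨f, f', hf', hft, hfe⟩ := stein_solution g g' hg hd hb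
    have e0 : berExp N a (fun ω => g (bT a α β ω / σ)) -
        ∫ z, g z ∂(ProbabilityTheory.gaussianReal 0 1) =
        berExp N a (fun ω => f' (bT a α β ω / σ)) -
          σ⁻¹ * berExp N a (fun ω => bT a α β ω * f (bT a α β ω / σ)) := by
      rw [← berExp_smul, ← berExp_sub]
      rw [← berExp_const N a (∫ z, g z ∂(ProbabilityTheory.gaussianReal 0 1)), ← berExp_sub]
      congr 1
      ext ω
      rw [← hfe]
      ring
    have e1 := bStein hN ha α β hsymm hdiag M hα hβ (fun x => f (x / σ)) (fun x => σ⁻¹ * f' (x / σ))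
      (12 / σ ^ 2) (by positivity) (fun x y => by
        have := hft (x / σ) (y / σ)
        convert this using 1
        · congr 1
          field_simp
        · field_simp)
    have e2 : |berExp N a (fun ω => f' (bT a α β ω / σ)) - σ⁻¹ *
        berExp N a (fun ω => bTau a α β ω * (σ⁻¹ * f' (bT a α β ω / σ)))| ≤
        8 / σ ^ 2 * (18 * M ^ 2 / (N * Real.sqrt N)) := by
      refine le_trans ?_ (mul_le_mul_of_nonneg_left (bTau_l1 hN ha α β hdiag M hα hβ)
        (by positivity))
      rw [← berExp_smul, ← berExp_sub, ← berExp_smul, hτ]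
      refine (berExp_abs_le ha _).trans (berExp_mono ha (fun ω => ?_))
      have : f' (bT a α β ω / σ) - σ⁻¹ * (bTau a α β ω * (σ⁻¹ * f' (bT a α β ω / σ))) =
          - (f' (bT a α β ω / σ) / σ ^ 2 * (bTau a α β ω - σ ^ 2)) := by
        field_simp
        ring
      rw [this, abs_neg, abs_mul, abs_div, abs_of_pos (by positivity : 0 < σ ^ 2)]
      gcongr
      exact hf' _
    have e3 := mul_le_mul_of_nonneg_left e1 (inv_pos.mpr hσ).le
    rw [← abs_of_pos (inv_pos.mpr hσ), ← abs_mul, abs_of_pos (inv_pos.mpr hσ)] at e3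
    rw [e0]
    have e4 := abs_sub
      (berExp N a (fun ω => f' (bT a α β ω / σ)) - σ⁻¹ *
        berExp N a (fun ω => bTau a α β ω * (σ⁻¹ * f' (bT a α β ω / σ))))
      (σ⁻¹ * (berExp N a (fun ω => bT a α β ω * f (bT a α β ω / σ)) -
        berExp N a (fun ω => bTau a α β ω * (σ⁻¹ * f' (bT a α β ω / σ)))))
    have e5 : (berExp N a (fun ω => f' (bT a α β ω / σ)) - σ⁻¹ *
        berExp N a (fun ω => bTau a α β ω * (σ⁻¹ * f' (bT a α β ω / σ)))) -
      (σ⁻¹ * (berExp N a (fun ω => bT a α β ω * f (bT a α β ω / σ)) -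
        berExp N a (fun ω => bTau a α β ω * (σ⁻¹ * f' (bT a α β ω / σ))))) =
        berExp N a (fun ω => f' (bT a α β ω / σ)) -
          σ⁻¹ * berExp N a (fun ω => bT a α β ω * f (bT a α β ω / σ)) := by ring
    rw [e5] at e4
    refine e4.trans ((add_le_add e2 e3).trans (le_of_eq ?_))
    field_simp
    ring
  apply le_of_forall_pos_le_add
  intro ε hε
  obtain ⟨g, g', hg, hd, hb, hgh⟩ := stein_smooth h hh (ε / 2) (by positivity)
  have m := main g g' hg hd hb
  have i1 : |berExp N a (fun ω => h (bT a α β ω / σ)) -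
      berExp N a (fun ω => g (bT a α β ω / σ))| ≤ ε / 2 := by
    rw [← berExp_sub]
    apply berExp_abs_le_const ha
    intro ω
    rw [abs_sub_comm]
    exact hgh _
  have i2 : |(∫ z, h z ∂(ProbabilityTheory.gaussianReal 0 1)) -
      ∫ z, g z ∂(ProbabilityTheory.gaussianReal 0 1)| ≤ ε / 2 := by
    rw [← MeasureTheory.integral_sub (stein_lip_integrable h hh) (stein_lip_integrable g hg)]
    have := MeasureTheory.norm_integral_le_of_norm_le_const
      (μ := ProbabilityTheory.gaussianReal 0 1) (f := fun z => h z - g z) (C := ε / 2)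
      (Filter.Eventually.of_forall (fun z => by
        rw [Real.norm_eq_abs, abs_sub_comm]
        exact hgh z))
    simpa using this
  rw [abs_le] at *
  constructor <;> linarith [m.1, m.2, i1.1, i1.2, i2.1, i2.2]

end ProbPart

section FinalPart

noncomputable def cE {N : ℕ} (l : Fin N → Bool → Bool → ℝ) (s t : Fin N) : ℝ :=
  if s ≠ t then (1 - l s false true) * (1 - l t false true) else 0

noncomputable def cAlpha {N : ℕ} (a : ℝ) (l : Fin N → Bool → Bool → ℝ) (s : Fin N) : ℝ :=
  ((N : ℝ) ^ 2)⁻¹ * (2 * (1 - 2 * a) * (1 - l s false true) +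
    2 * (2 * a * (1 - a)) * (1 - 2 * a) * ∑ t, cE l s t)

noncomputable def cBeta {N : ℕ} (a : ℝ) (l : Fin N → Bool → Bool → ℝ) (s t : Fin N) : ℝ :=
  ((N : ℝ) ^ 2)⁻¹ * ((1 - 2 * a) ^ 2 * cE l s t)

lemma cE_symm {N : ℕ} (l : Fin N → Bool → Bool → ℝ) (s t : Fin N) : cE l s t = cE l t s := by
  unfold cE
  by_cases h : s = t
  · subst h
    rfl
  · rw [if_pos h, if_pos (Ne.symm h)]
    ring

lemma cC_bound {x : ℝ} (h : |x| ≤ 1) : |1 - x| ≤ 2 := by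
  rw [abs_le] at *
  constructor <;> linarith [h.1, h.2]

lemma cE_abs {N : ℕ} (l : Fin N → Bool → Bool → ℝ) (hl : ∀ s : Fin N, |l s false true| ≤ 1)
    (s t : Fin N) : |cE l s t| ≤ 4 := by
  unfold cE
  split_ifs
  · rw [abs_mul]
    calc _ ≤ (2:ℝ) * 2 := mul_le_mul (cC_bound (hl s)) (cC_bound (hl t)) (abs_nonneg _) (by norm_num)
      _ = 4 := by norm_num
  · simp

lemma cK_abs {a : ℝ} (ha : a ∈ Set.Icc (0 : ℝ) 1) : |1 - 2 * a| ≤ 1 := by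
  obtain ⟨h0, h1⟩ := ha
  rw [abs_le]
  constructor <;> linarith

lemma cBeta_abs {N : ℕ} (hN : 1 ≤ N) {a : ℝ} (ha : a ∈ Set.Icc (0 : ℝ) 1)
    (l : Fin N → Bool → Bool → ℝ) (hl : ∀ s : Fin N, |l s false true| ≤ 1) (s t : Fin N) :
    |cBeta a l s t| ≤ 8 / (N : ℝ) ^ 2 := by
  have hN0 : (0 : ℝ) < N := by exact_mod_cast hN
  unfold cBeta
  rw [abs_mul, abs_of_pos (by positivity), abs_mul, abs_pow, div_eq_inv_mul]
  apply mul_le_mul_of_nonneg_left _ (by positivity)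
  calc |1 - 2 * a| ^ 2 * |cE l s t| ≤ 1 ^ 2 * 4 :=
        mul_le_mul (pow_le_pow_left₀ (abs_nonneg _) (cK_abs ha) 2) (cE_abs l hl s t)
          (abs_nonneg _) (by norm_num)
    _ ≤ 8 := by norm_num

lemma cAlpha_abs {N : ℕ} (hN : 1 ≤ N) {a : ℝ} (ha : a ∈ Set.Icc (0 : ℝ) 1)
    (l : Fin N → Bool → Bool → ℝ) (hl : ∀ s : Fin N, |l s false true| ≤ 1) (s : Fin N) :
    |cAlpha a l s| ≤ 8 / (N : ℝ) := by
  have hN1 : (1 : ℝ) ≤ N := by exact_mod_cast hN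
  have hN0 : (0 : ℝ) < N := by linarith
  have hk := cK_abs ha
  have hs : |∑ t, cE l s t| ≤ 4 * N := by
    refine (Finset.abs_sum_le_sum_abs _ _).trans
      ((Finset.sum_le_sum (fun t _ => cE_abs l hl s t)).trans (le_of_eq ?_))
    simp
    ring
  have hmu : |2 * (2 * a * (1 - a))| ≤ 1 := by
    obtain ⟨h0, h1⟩ := ha
    rw [abs_le]
    constructor <;> nlinarith [sq_nonneg (1 - 2 * a)]
  have h1 : |2 * (1 - 2 * a) * (1 - l s false true)| ≤ 4 := by
    rw [abs_mul, abs_mul, abs_of_pos (by norm_num : (0:ℝ) < 2)]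
    calc 2 * |1 - 2 * a| * |1 - l s false true| ≤ 2 * 1 * 2 :=
          mul_le_mul (by linarith) (cC_bound (hl s)) (abs_nonneg _) (by norm_num)
      _ = 4 := by norm_num
  have h2 : |2 * (2 * a * (1 - a)) * (1 - 2 * a) * ∑ t, cE l s t| ≤ 4 * N := by
    rw [abs_mul, abs_mul]
    calc _ ≤ 1 * 1 * (4 * (N : ℝ)) :=
          mul_le_mul (mul_le_mul hmu hk (abs_nonneg _) (by norm_num)) hs (abs_nonneg _)
            (by norm_num)
      _ = _ := by ring
  unfold cAlpha
  rw [abs_mul, abs_of_pos (by positivity)]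
  calc _ ≤ ((N : ℝ) ^ 2)⁻¹ * (4 + 4 * N) := by
        apply mul_le_mul_of_nonneg_left _ (by positivity)
        exact (abs_add_le _ _).trans (add_le_add h1 h2)
    _ ≤ ((N : ℝ) ^ 2)⁻¹ * (8 * N) := by
        apply mul_le_mul_of_nonneg_left _ (by positivity)
        linarith
    _ = _ := by field_simp

lemma Tstat_decomp {N : ℕ} (a : ℝ) (l : Fin N → Bool → Bool → ℝ)
    (hs : ∀ (s : Fin N) (b b' : Bool), l s b b' = l s b' b)
    (h0 : ∀ s : Fin N, l s false false = 1) (h1 : ∀ s : Fin N, l s true true = 1) :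
    ∃ K : ℝ, ∀ ω, Tstat N a l ω = K + bT a (cAlpha a l) (cBeta a l) ω := by
  set μ := 2 * a * (1 - a) with hμ
  set κ := 1 - 2 * a with hκ
  refine ⟨((N : ℝ) ^ 2)⁻¹ * ((∑ s, ∑ t, μ ^ 2 * cE l s t) +
    ∑ s, 2 * (a ^ 2 + κ * a) * (1 - l s false true)), fun ω => ?_⟩
  have hX : ∀ s, (a - bval (ω s)) * (l s true (ω s) - l s false (ω s)) =
      -((1 - l s false true) * (μ + κ * bxi a s ω)) := by
    intro s
    unfold bxi
    rcases hb : ω s with _ | _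
    · rw [h0, hs s true false]
      simp [bval, hμ, hκ]
      ring
    · rw [h1]
      simp [bval, hμ, hκ]
      ring
  have hS : ∀ s, (a - bval (ω s)) ^ 2 = a ^ 2 + κ * a + κ * bxi a s ω := by
    intro s
    unfold bxi
    rcases hb : ω s with _ | _
    · simp [bval, hκ]
    · simp [bval, hκ]
      ring
  have e1 : ∀ s t, (if s ≠ t then
          (a - bval (ω s)) * (a - bval (ω t)) * (l s true (ω s) - l s false (ω s)) *
            (l t true (ω t) - l t false (ω t))
        else 0) = μ ^ 2 * cE l s t + μ * κ * (cE l s t * bxi a s ω) +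
          μ * κ * (cE l s t * bxi a t ω) + κ ^ 2 * (cE l s t * bxi a s ω * bxi a t ω) := by
    intro s t
    unfold cE
    by_cases h : s ≠ t
    · rw [if_pos h, if_pos h]
      have : (a - bval (ω s)) * (a - bval (ω t)) * (l s true (ω s) - l s false (ω s)) *
            (l t true (ω t) - l t false (ω t)) =
          ((a - bval (ω s)) * (l s true (ω s) - l s false (ω s))) *
          ((a - bval (ω t)) * (l t true (ω t) - l t false (ω t))) := by ring
      rw [this, hX, hX]
      ring
    · rw [if_neg h, if_neg h]
      ring
  have e2 : ∑ s, ∑ t, cE l s t * bxi a t ω = ∑ s, ∑ t, cE l s t * bxi a s ω := by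
    rw [Finset.sum_comm]
    refine Finset.sum_congr rfl (fun s _ => Finset.sum_congr rfl (fun t _ => ?_))
    rw [cE_symm]
  unfold Tstat
  simp only [e1, hS, Finset.sum_add_distrib, ← Finset.mul_sum]
  rw [e2]
  have e3 : bT a (cAlpha a l) (cBeta a l) ω = ((N : ℝ) ^ 2)⁻¹ *
      (2 * κ * ∑ s, (1 - l s false true) * bxi a s ω +
        2 * μ * κ * ∑ s, ∑ t, cE l s t * bxi a s ω +
        κ ^ 2 * ∑ s, ∑ t, cE l s t * bxi a s ω * bxi a t ω) := by
    unfold bT bA cAlpha cBeta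
    simp only [Finset.mul_sum, ← Finset.sum_add_distrib]
    refine Finset.sum_congr rfl (fun s _ => ?_)
    simp only [mul_add, Finset.mul_sum, ← Finset.sum_add_distrib, add_assoc]
    congr 1
    · ring
    · exact Finset.sum_congr rfl (fun t _ => by ring)
  have e4 : ∑ s, (a ^ 2 + κ * a + κ * bxi a s ω) * (2 - 2 * l s false true) =
      2 * (a ^ 2 + κ * a) * ∑ s, (1 - l s false true) +
        2 * κ * ∑ s, (1 - l s false true) * bxi a s ω := by
    simp only [Finset.mul_sum, ← Finset.sum_add_distrib]
    exact Finset.sum_congr rfl (fun t _ => by ring)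
  rw [e3, e4]
  ring

lemma bT_mean {N : ℕ} (a : ℝ) (α : Fin N → ℝ) (β : Fin N → Fin N → ℝ)
    (hdiag : ∀ s, β s s = 0) : berExp N a (bT a α β) = 0 := by
  have : bT a α β = fun ω => ∑ s, bxi a s ω * bA a α β 1 s ω := rfl
  rw [this, berExp_sum]
  refine Finset.sum_eq_zero (fun s _ => berExp_bxi_mul a s _ (fun ω b => ?_))
  rw [bA_update, hdiag]
  ring

lemma gKSS_main {N : ℕ} (hN : 1 ≤ N) {a : ℝ} (ha : a ∈ Set.Icc (0 : ℝ) 1)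
    (l : Fin N → Bool → Bool → ℝ)
    (hs : ∀ (s : Fin N) (b b' : Bool), l s b b' = l s b' b)
    (h0 : ∀ s : Fin N, l s false false = 1) (h1 : ∀ s : Fin N, l s true true = 1)
    (hl : ∀ s : Fin N, |l s false true| ≤ 1) (hv : 0 < varT N a l)
    (f : ℝ → ℝ) (hf : LipschitzWith 1 f) :
    |berExp N a (fun ω => f (Wstat N a l ω)) -
      ∫ z, f z ∂(ProbabilityTheory.gaussianReal 0 1)| ≤
      165888 * (1 / (varT N a l * (N : ℝ) * Real.sqrt (N : ℝ)) +
        1 / (varT N a l * Real.sqrt (varT N a l) * ((N : ℝ)) ^ 2)) := by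
  have hN0 : (0 : ℝ) < N := by exact_mod_cast hN
  obtain ⟨K, hK⟩ := Tstat_decomp a l hs h0 h1
  have hdiag : ∀ s, cBeta a l s s = 0 := by
    intro s
    simp [cBeta, cE]
  have hsymm : ∀ s t, cBeta a l s t = cBeta a l t s := by
    intro s t
    simp only [cBeta]
    rw [cE_symm]
  have hm := bT_mean a (cAlpha a l) (cBeta a l) hdiag
  have hT : Tstat N a l = fun ω => K + bT a (cAlpha a l) (cBeta a l) ω := funext hK
  have hmean : berExp N a (Tstat N a l) = K := by
    rw [hT, berExp_add, berExp_const, hm, add_zero]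
  have hvar : varT N a l = berExp N a (fun ω => bT a (cAlpha a l) (cBeta a l) ω ^ 2) := by
    unfold varT
    rw [← berExp_var_eq, hmean]
    congr 1
    ext ω
    rw [hK]
    ring
  have hσ : 0 < Real.sqrt (varT N a l) := Real.sqrt_pos.mpr hv
  have hσ2 : Real.sqrt (varT N a l) ^ 2 = varT N a l := Real.sq_sqrt hv.le
  have hW : Wstat N a l = fun ω => bT a (cAlpha a l) (cBeta a l) ω / Real.sqrt (varT N a l) := by
    ext ω
    unfold Wstat
    rw [hmean, hK]
    congr 1
    ring
  have := bStein_lip hN ha (cAlpha a l) (cBeta a l) hsymm hdiag 8 (cAlpha_abs hN ha l hl)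
    (cBeta_abs hN ha l hl) (Real.sqrt (varT N a l)) hσ (by rw [hσ2, hvar]) f hf
  rw [hW]
  refine this.trans ?_
  have e3 : Real.sqrt (varT N a l) ^ 3 = varT N a l * Real.sqrt (varT N a l) := by
    rw [pow_succ, hσ2]
  rw [hσ2, e3, mul_add]
  have hsN : 0 < Real.sqrt (N : ℝ) := Real.sqrt_pos.mpr hN0
  apply add_le_add
  · rw [mul_one_div, ← mul_assoc]
    apply div_le_div_of_nonneg_right _ (by positivity)
    norm_num
  · rw [mul_one_div]
    apply div_le_div_of_nonneg_right _ (by positivity)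
    norm_num

end FinalPart

/-- Theorem 2, normal approximation of gKSS² under the Bernoulli null:
there is an absolute constant `C > 0` such that for every `N ≥ 1`, `a* ∈ [0,1]` and
symmetric kernels `l_s` with `l_s(0,0) = l_s(1,1) = 1`, `|l_s(0,1)| ≤ 1`, if
`σ² = Var(T) > 0` and `W = (T − E[T])/σ` then the Wasserstein distance between `W` and a
standard normal `Z` is at most `C(1/(σ²N^{3/2}) + 1/(σ³N²))`; in particular, if
`N σ² ≥ c₀ > 0` it is at most `C(c₀⁻¹ + c₀^{−3/2})/√N`. -/
theorem gKSS_sq_normal_approximation :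
    ∃ C : ℝ, 0 < C ∧
      ∀ (N : ℕ), 1 ≤ N → ∀ a : ℝ, a ∈ Set.Icc (0 : ℝ) 1 →
        ∀ l : Fin N → Bool → Bool → ℝ,
          (∀ (s : Fin N) (b b' : Bool), l s b b' = l s b' b) →
          (∀ s : Fin N, l s false false = 1) → (∀ s : Fin N, l s true true = 1) →
          (∀ s : Fin N, |l s false true| ≤ 1) →
          0 < varT N a l →
          (∀ f : ℝ → ℝ, LipschitzWith 1 f →
            |berExp N a (fun ω => f (Wstat N a l ω)) -
                ∫ z, f z ∂(ProbabilityTheory.gaussianReal 0 1)| ≤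
              C * (1 / (varT N a l * (N : ℝ) * Real.sqrt (N : ℝ)) +
                1 / (varT N a l * Real.sqrt (varT N a l) * ((N : ℝ)) ^ 2))) ∧
          ∀ c₀ : ℝ, 0 < c₀ → c₀ ≤ (N : ℝ) * varT N a l →
            ∀ f : ℝ → ℝ, LipschitzWith 1 f →
              |berExp N a (fun ω => f (Wstat N a l ω)) -
                  ∫ z, f z ∂(ProbabilityTheory.gaussianReal 0 1)| ≤
                C * (c₀⁻¹ + (c₀ * Real.sqrt c₀)⁻¹) / Real.sqrt (N : ℝ) := by
  refine ⟨165888, by norm_num, ?_⟩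
  intro N hN a ha l hs h0 h1 hl hv
  have key := gKSS_main hN ha l hs h0 h1 hl hv
  refine ⟨key, ?_⟩
  intro c₀ hc hcN f hf
  refine (key f hf).trans ?_
  have hN0 : (0 : ℝ) < N := by exact_mod_cast hN
  have hsN : 0 < Real.sqrt (N : ℝ) := Real.sqrt_pos.mpr hN0
  have hsc : 0 < Real.sqrt c₀ := Real.sqrt_pos.mpr hc
  have hsq : Real.sqrt (N : ℝ) * Real.sqrt (N : ℝ) = N := Real.mul_self_sqrt hN0.le
  rw [mul_div_assoc]
  apply mul_le_mul_of_nonneg_left _ (by norm_num)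
  rw [add_div]
  apply add_le_add
  · rw [inv_eq_one_div, div_div]
    apply one_div_le_one_div_of_le (by positivity)
    apply mul_le_mul_of_nonneg_right _ hsN.le
    linarith
  · rw [inv_eq_one_div, div_div]
    apply one_div_le_one_div_of_le (by positivity)
    have h2 : Real.sqrt c₀ ≤ Real.sqrt (N : ℝ) * Real.sqrt (varT N a l) := by
      rw [← Real.sqrt_mul hN0.le]
      exact Real.sqrt_le_sqrt hcN
    have h3 : varT N a l * Real.sqrt (varT N a l) * (N : ℝ) ^ 2 =
        ((N : ℝ) * varT N a l) * (Real.sqrt (N : ℝ) * Real.sqrt (varT N a l)) *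
          Real.sqrt (N : ℝ) := by
      linear_combination (-(varT N a l * Real.sqrt (varT N a l) * N)) * hsq
    rw [h3]
    apply mul_le_mul_of_nonneg_right _ hsN.le
    exact mul_le_mul hcN h2 hsc.le (by positivity)
end
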